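/- Let s ∈ (0,1), q ≥ 2, u ∈ C_c^∞(ℝⁿ), and let U be its Caffarelli–Silvestre extension. Then for every x ∈ ℝⁿ, (1/q) Λ^s( |u|^q )(x) − |u(x)|^{q−2} u(x) · Λ^s u(x) = (4(q−1)/q²) β_s ∫₀^∞ ( P_z^{(s)} ∗ ( (q²/4) |U(·,z)|^{q−2} |∇̃U(·,z)|² ) )(x) z^{1−2s} dz, where (q²/4)|U|^{q−2}|∇̃U|² = |∇̃(|U|^{q/2})|² and |∇̃U|² = |∇_x U|² + |∂_z U|² (pointwise Stroock–Varopoulos identity). -/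

import Mathlib

open MeasureTheory Filter Set
open scoped Topology ENNReal NNReal

noncomputable section

/-- `ℝⁿ` with the Euclidean norm. -/
abbrev En (n : ℕ) := EuclideanSpace ℝ (Fin n)

/-- The normalizing constant `p(n,s) = Γ(n/2+s)/(π^{n/2} Γ(s))` of the Poisson kernel. -/
def pns (n : ℕ) (s : ℝ) : ℝ :=
  Real.Gamma ((n : ℝ) / 2 + s) / (Real.pi ^ ((n : ℝ) / 2) * Real.Gamma s)

/-- The fractional Poisson kernel `P_z^{(s)}(x) = p(n,s) z^{2s} (|x|² + z²)^{-(n+2s)/2}`. -/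
def Pker (n : ℕ) (s z : ℝ) (x : En n) : ℝ :=
  pns n s * z ^ (2 * s) * (‖x‖ ^ 2 + z ^ 2) ^ (-((n : ℝ) + 2 * s) / 2)

/-- Convolution with the fractional Poisson kernel in the first variable, at fixed `z`. -/
def Pconv (n : ℕ) (s z : ℝ) (f : En n → ℝ) (x : En n) : ℝ :=
  ∫ y, Pker n s z (x - y) * f y

/-- The Caffarelli–Silvestre extension `U(x,z) = (P_z^{(s)} ∗ u)(x)`. -/
def CSext (n : ℕ) (s : ℝ) (u : En n → ℝ) (x : En n) (z : ℝ) : ℝ :=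
  Pconv n s z u x

/-- The constant `C(n,s) = 4^s Γ(n/2+s) / (π^{n/2} |Γ(-s)|)`. -/
def Cns (n : ℕ) (s : ℝ) : ℝ :=
  4 ^ s * Real.Gamma ((n : ℝ) / 2 + s) / (Real.pi ^ ((n : ℝ) / 2) * |Real.Gamma (-s)|)

/-- The fractional Laplacian `(-Δ)^s w(x)` as a principal-value singular integral. -/
def fracLap (n : ℕ) (s : ℝ) (w : En n → ℝ) (x : En n) : ℝ :=
  Cns n s * limUnder (𝓝[>] (0 : ℝ))
    (fun ε : ℝ => ∫ y in {y : En n | ε < ‖x - y‖}, (w x - w y) / ‖x - y‖ ^ ((n : ℝ) + 2 * s))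

/-- `Λ^s w := -(-Δ)^s w`. -/
def Lam (n : ℕ) (s : ℝ) (w : En n → ℝ) (x : En n) : ℝ := - fracLap n s w x

/-- The first-order carré du champ `Γ₁(u,v) = ½(Λ^s(uv) - u Λ^s v - v Λ^s u)`. -/
def Gamma1 (n : ℕ) (s : ℝ) (u v : En n → ℝ) (x : En n) : ℝ :=
  (Lam n s (fun y => u y * v y) x - u x * Lam n s v x - v x * Lam n s u x) / 2

/-- The constant `β_s = 2^{2s-1} Γ(s)/Γ(1-s)`. -/
def betaS (s : ℝ) : ℝ := 2 ^ (2 * s - 1) * Real.Gamma s / Real.Gamma (1 - s)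

/-- Partial derivative in the `i`-th coordinate direction. -/
def pd {n : ℕ} (i : Fin n) (f : En n → ℝ) (x : En n) : ℝ :=
  fderiv ℝ f x (EuclideanSpace.single i 1)

/-- The Laplacian in the `x`-variables. -/
def lapX {n : ℕ} (f : En n → ℝ) (x : En n) : ℝ := ∑ i, pd i (pd i f) x

/-- The degenerate operator `L_s W = div_{x,z}(z^{1-2s} ∇̃W)`, written out as
`z^{1-2s} Δ_x W + ∂_z(z^{1-2s} ∂_z W)`. -/
def LsOp {n : ℕ} (s : ℝ) (W : En n → ℝ → ℝ) (x : En n) (z : ℝ) : ℝ :=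
  z ^ (1 - 2 * s) * lapX (fun y => W y z) x
    + deriv (fun t => t ^ (1 - 2 * s) * deriv (W x) t) z

/-!
Fix `x` and let `ψ(r) = φ(r) - φ(u(x)) - φ'(u(x)) (r - u(x))` with `φ(r) = |r|^q`. The Poisson
kernel centred at `x` is a solution, and the extension `U` of `u` is another, of
`div (z^{1-2s} ∇̃ ·) = 0`; hence the derivative in `z` of the Green flux of `P_z(x - ·)` and `ψ(U)`
through height `z` is `z^{1-2s} (P_z ∗ (φ''(U) |∇̃U|²))(x)`. The flux vanishes as `z → ∞`. Since `ψ`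
vanishes to second order at `u(x)`, as `z → 0⁺` it tends to minus a multiple of
`∫ |x - y|^{-n-2s} ψ(u(y)) dy`, which converges absolutely and, the linear part of `ψ` producing
`Λ^s u`, is `Λ^s(φ(u))(x) - φ'(u(x)) Λ^s u(x)` up to a constant. Taking `φ(r) = r²` first, where the
derivative of the flux is nonnegative, gives the integrability in `z` that the general case needs.
-/

open scoped Convolution

section BoundedFunctions

lemma exists_abs_le_of_continuous {f : ℝ → ℝ} (hf : Continuous f) (M : ℝ) :
    ∃ K, ∀ r, |r| ≤ M → |f r| ≤ K := by
  obtain ⟨K, hK⟩ :=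
    (isCompact_Icc (a := -M) (b := M)).exists_bound_of_continuousOn hf.continuousOn
  exact ⟨K, fun r hr => hK r (abs_le.1 hr)⟩

/-- Bounded continuous functions, unbundled: the class that is paired with integrable kernels. -/
structure BddContinuous {X F : Type*} [TopologicalSpace X] [NormedAddCommGroup F] (f : X → F) :
    Prop where
  continuous : Continuous f
  bounded : ∃ C, ∀ x, ‖f x‖ ≤ C

namespace BddContinuous

variable {X Y F : Type*} [TopologicalSpace X] [TopologicalSpace Y] [NormedAddCommGroup F]

lemma comp_continuous {f : Y → F} (hf : BddContinuous f) {g : X → Y} (hg : Continuous g) :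
    BddContinuous fun x => f (g x) :=
  ⟨hf.continuous.comp hg, hf.bounded.imp fun _ hC _ => hC _⟩

lemma const (c : F) : BddContinuous fun _ : X => c :=
  ⟨continuous_const, ‖c‖, fun _ => le_rfl⟩

lemma neg {f : X → F} (hf : BddContinuous f) : BddContinuous fun x => -f x :=
  ⟨hf.continuous.neg, hf.bounded.imp fun _ hC x => (norm_neg (f x)).trans_le (hC x)⟩

lemma add {f g : X → F} (hf : BddContinuous f) (hg : BddContinuous g) :
    BddContinuous fun x => f x + g x := by
  obtain ⟨C, hC⟩ := hf.bounded
  obtain ⟨D, hD⟩ := hg.bounded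
  exact ⟨hf.continuous.add hg.continuous, C + D,
    fun x => (norm_add_le _ _).trans (add_le_add (hC x) (hD x))⟩

lemma mul {f g : X → ℝ} (hf : BddContinuous f) (hg : BddContinuous g) :
    BddContinuous fun x => f x * g x := by
  obtain ⟨C, hC⟩ := hf.bounded
  obtain ⟨D, hD⟩ := hg.bounded
  exact ⟨hf.continuous.mul hg.continuous, C * D, fun x => (norm_mul_le _ _).trans
    (mul_le_mul (hC x) (hD x) (norm_nonneg _) ((norm_nonneg _).trans (hC x)))⟩

lemma pow {f : X → ℝ} (hf : BddContinuous f) (k : ℕ) : BddContinuous fun x => f x ^ k := by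
  obtain ⟨C, hC⟩ := hf.bounded
  exact ⟨hf.continuous.pow k, C ^ k, fun x => by rw [norm_pow]; gcongr; exact hC x⟩

lemma sum {ι : Type*} {s : Finset ι} {f : ι → X → F} (hf : ∀ i ∈ s, BddContinuous (f i)) :
    BddContinuous fun x => ∑ i ∈ s, f i x := by
  choose! C hC using fun i hi => (hf i hi).bounded
  exact ⟨continuous_finsetSum s fun i hi => (hf i hi).continuous, ∑ i ∈ s, C i,
    fun x => norm_sum_le_of_le s fun i hi => hC i hi x⟩

lemma continuous_comp {f : X → ℝ} (hf : BddContinuous f) {φ : ℝ → F} (hφ : Continuous φ) :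
    BddContinuous fun x => φ (f x) := by
  obtain ⟨C, hC⟩ := hf.bounded
  obtain ⟨D, hD⟩ := (isCompact_Icc (a := -C) (b := C)).exists_bound_of_continuousOn hφ.continuousOn
  exact ⟨hφ.comp hf.continuous, D, fun x => hD _ (abs_le.1 (hC x))⟩

lemma integrable_smul [SecondCountableTopology X] [MeasurableSpace X] [OpensMeasurableSpace X]
    [NormedSpace ℝ F] {μ : Measure X} {f : X → F} (hf : BddContinuous f) {k : X → ℝ}
    (hk : Integrable k μ) :
    Integrable (fun x => k x • f x) μ := by
  obtain ⟨C, hC⟩ := hf.bounded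
  exact hk.smul_bdd C hf.continuous.aestronglyMeasurable (.of_forall hC)

lemma integrable_mul [SecondCountableTopology X] [MeasurableSpace X] [OpensMeasurableSpace X]
    {μ : Measure X} {f : X → ℝ} (hf : BddContinuous f) {k : X → ℝ} (hk : Integrable k μ) :
    Integrable (fun x => k x * f x) μ :=
  hf.integrable_smul hk

end BddContinuous

/-- `C¹` functions that are bounded together with their derivative. -/
structure BddContDiffOne {E F : Type*} [NormedAddCommGroup E] [NormedSpace ℝ E]
    [NormedAddCommGroup F] [NormedSpace ℝ F] (f : E → F) : Prop where
  contDiff : ContDiff ℝ 1 f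
  bounded : ∃ C, ∀ x, ‖f x‖ ≤ C
  fderiv_bounded : ∃ C, ∀ x, ‖fderiv ℝ f x‖ ≤ C

/-- `C²` functions that are bounded together with their first two derivatives. -/
structure BddContDiffTwo {E F : Type*} [NormedAddCommGroup E] [NormedSpace ℝ E]
    [NormedAddCommGroup F] [NormedSpace ℝ F] (f : E → F) : Prop where
  toBddContDiffOne : BddContDiffOne f
  bddContDiffOne_fderiv : BddContDiffOne (fderiv ℝ f)

variable {E F : Type*} [NormedAddCommGroup E] [NormedSpace ℝ E] [NormedAddCommGroup F]
  [NormedSpace ℝ F] {f : E → F}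

lemma bddContDiffOne_of_hasCompactSupport (hf : ContDiff ℝ 1 f) (hc : HasCompactSupport f) :
    BddContDiffOne f :=
  ⟨hf, hf.continuous.bounded_above_of_compact_support hc,
    (hf.continuous_fderiv one_ne_zero).bounded_above_of_compact_support (hc.fderiv ℝ)⟩

lemma bddContDiffTwo_of_hasCompactSupport (hf : ContDiff ℝ 2 f) (hc : HasCompactSupport f) :
    BddContDiffTwo f :=
  ⟨bddContDiffOne_of_hasCompactSupport (hf.of_le one_le_two) hc,
    bddContDiffOne_of_hasCompactSupport (hf.fderiv_right le_rfl) (hc.fderiv ℝ)⟩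

namespace BddContDiffOne

lemma bddContinuous (hf : BddContDiffOne f) : BddContinuous f :=
  ⟨hf.contDiff.continuous, hf.bounded⟩

lemma bddContinuous_fderiv (hf : BddContDiffOne f) : BddContinuous (fderiv ℝ f) :=
  ⟨hf.contDiff.continuous_fderiv one_ne_zero, hf.fderiv_bounded⟩

lemma hasFDerivAt (hf : BddContDiffOne f) (x : E) : HasFDerivAt f (fderiv ℝ f x) x :=
  (hf.contDiff.differentiable one_ne_zero x).hasFDerivAt

lemma clm_apply {f : E → E →L[ℝ] F} (hf : BddContDiffOne f) (e : E) :
    BddContDiffOne fun x => f x e := by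
  obtain ⟨C, hC⟩ := hf.bounded
  obtain ⟨D, hD⟩ := hf.fderiv_bounded
  refine ⟨hf.contDiff.clm_apply contDiff_const, ⟨C * ‖e‖, fun x => (f x).le_of_opNorm_le (hC x) e⟩,
    D * ‖e‖, fun x => ContinuousLinearMap.opNorm_le_bound _
      (mul_nonneg ((norm_nonneg _).trans (hD x)) (norm_nonneg e)) fun v => ?_⟩
  have hderiv : fderiv ℝ (fun y => f y e) x v = fderiv ℝ f x v e := by
    rw [((hf.hasFDerivAt x).clm_apply (hasFDerivAt_const e x)).fderiv]
    simp
  calc ‖fderiv ℝ (fun y => f y e) x v‖ = ‖fderiv ℝ f x v e‖ := by rw [hderiv]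
    _ ≤ D * ‖v‖ * ‖e‖ :=
        (fderiv ℝ f x v).le_of_opNorm_le ((fderiv ℝ f x).le_of_opNorm_le (hD x) v) e
    _ = D * ‖e‖ * ‖v‖ := by ring

lemma exists_norm_sub_le (hf : BddContDiffOne f) :
    ∃ L, 0 ≤ L ∧ ∀ x y, ‖f y - f x‖ ≤ L * ‖y - x‖ := by
  obtain ⟨L, hL⟩ := hf.fderiv_bounded
  exact ⟨L, (norm_nonneg _).trans (hL 0), fun x y =>
    convex_univ.norm_image_sub_le_of_norm_fderiv_le (𝕜 := ℝ)
      (fun z _ => hf.contDiff.differentiable one_ne_zero z) (fun z _ => hL z) (mem_univ x)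
      (mem_univ y)⟩

end BddContDiffOne

lemma le_max_mul_min {a b r t : ℝ} (hr : 0 ≤ r) (ha : t ≤ a * r) (hb : t ≤ b) (hb0 : 0 ≤ b) :
    t ≤ max a b * min r 1 := by
  rw [mul_min_of_nonneg _ _ (le_max_of_le_right hb0), mul_one]
  exact le_min (ha.trans (mul_le_mul_of_nonneg_right (le_max_left a b) hr))
    (hb.trans (le_max_right a b))

lemma BddContDiffOne.exists_norm_sub_sq_le (hf : BddContDiffOne f) :
    ∃ M, ∀ x y, ‖f y - f x‖ ^ 2 ≤ M * min (‖x - y‖ ^ 2) 1 := by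
  obtain ⟨L, -, hL⟩ := hf.exists_norm_sub_le
  obtain ⟨C, hC⟩ := hf.bounded
  refine ⟨max (L ^ 2) ((C + C) ^ 2), fun x y => le_max_mul_min (sq_nonneg _) ?_ ?_ (sq_nonneg _)⟩
  · rw [← mul_pow, norm_sub_rev x y]
    exact pow_le_pow_left₀ (norm_nonneg _) (hL x y) 2
  · exact pow_le_pow_left₀ (norm_nonneg _) ((norm_sub_le _ _).trans (add_le_add (hC y) (hC x))) 2

namespace BddContDiffTwo

lemma exists_norm_taylor_le (hf : BddContDiffTwo f) :
    ∃ L, ∀ x y, ‖f y - f x - fderiv ℝ f x (y - x)‖ ≤ L * ‖y - x‖ ^ 2 := by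
  obtain ⟨L, hL0, hL⟩ := hf.bddContDiffOne_fderiv.exists_norm_sub_le
  refine ⟨L, fun x y => ?_⟩
  have hball : ∀ z ∈ Metric.closedBall x ‖y - x‖, ‖fderiv ℝ f z - fderiv ℝ f x‖ ≤ L * ‖y - x‖ :=
    fun z hz => (hL x z).trans (mul_le_mul_of_nonneg_left (mem_closedBall_iff_norm.1 hz) hL0)
  rw [sq, ← mul_assoc]
  exact (convex_closedBall x ‖y - x‖).norm_image_sub_le_of_norm_fderiv_le' (𝕜 := ℝ)
    (fun z _ => hf.toBddContDiffOne.contDiff.differentiable one_ne_zero z) hball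
    (Metric.mem_closedBall_self (norm_nonneg _)) (mem_closedBall_iff_norm.2 le_rfl)

lemma exists_norm_second_difference_le (hf : BddContDiffTwo f) :
    ∃ M, 0 ≤ M ∧ ∀ x v, ‖f (x - v) + f (x + v) - (2 : ℝ) • f x‖ ≤ M * min (‖v‖ ^ 2) 1 := by
  obtain ⟨L, hL⟩ := hf.exists_norm_taylor_le
  obtain ⟨C, hC⟩ := hf.toBddContDiffOne.bounded
  have hC0 : 0 ≤ C := (norm_nonneg _).trans (hC 0)
  refine ⟨max (L + L) (C + C + 2 * C), by positivity,
    fun x v => le_max_mul_min (sq_nonneg _) ?_ ?_ (by positivity)⟩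
  · have hminus := hL x (x - v)
    have hplus := hL x (x + v)
    simp only [sub_sub_cancel_left, add_sub_cancel_left, norm_neg, map_neg, sub_neg_eq_add]
      at hminus hplus
    have hsplit : f (x - v) + f (x + v) - (2 : ℝ) • f x =
        (f (x - v) - f x + fderiv ℝ f x v) + (f (x + v) - f x - fderiv ℝ f x v) := by
      rw [two_smul]; abel
    rw [hsplit, add_mul]
    exact (norm_add_le _ _).trans (add_le_add hminus hplus)
  · refine (norm_sub_le _ _).trans (add_le_add ((norm_add_le _ _).trans
      (add_le_add (hC _) (hC _))) ?_)
    rw [norm_smul, Real.norm_two]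
    exact mul_le_mul_of_nonneg_left (hC x) zero_le_two

end BddContDiffTwo

lemma BddContDiffTwo.bddContDiffOne_pd {n : ℕ} {u : En n → ℝ} (hu : BddContDiffTwo u)
    (i : Fin n) : BddContDiffOne (pd i u) :=
  hu.bddContDiffOne_fderiv.clm_apply _

lemma BddContDiffOne.bddContinuous_pd {n : ℕ} {u : En n → ℝ} (hu : BddContDiffOne u) (i : Fin n) :
    BddContinuous (pd i u) :=
  ⟨(hu.contDiff.continuous_fderiv one_ne_zero).clm_apply continuous_const, by
    obtain ⟨C, hC⟩ := hu.fderiv_bounded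
    exact ⟨C * ‖EuclideanSpace.single i (1 : ℝ)‖,
      fun x => (fderiv ℝ u x).le_of_opNorm_le (hC x) _⟩⟩

lemma BddContDiffOne.hasLineDerivAt_pd {n : ℕ} {u : En n → ℝ} (hu : BddContDiffOne u) (i : Fin n)
    (x : En n) : HasLineDerivAt ℝ u (pd i u x) x (EuclideanSpace.single i 1) :=
  (hu.hasFDerivAt x).hasLineDerivAt _

end BoundedFunctions

section Convolution

variable {E F : Type*} [NormedAddCommGroup E] [MeasureSpace E] [NormedAddCommGroup F]
  [NormedSpace ℝ F] {k : E → ℝ} {f : E → F}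

lemma norm_convolution_le {M : ℝ} (hk : Integrable k) (hM : ∀ x, ‖f x‖ ≤ M) (x : E) :
    ‖(k ⋆ f) x‖ ≤ M * ∫ v, |k v| := by
  rw [convolution_lsmul, ← integral_const_mul]
  refine norm_integral_le_of_norm_le (hk.abs.const_mul M) (.of_forall fun v => ?_)
  rw [norm_smul, mul_comm]
  exact mul_le_mul_of_nonneg_right (hM _) (abs_nonneg _)

variable [BorelSpace E] [SecondCountableTopology E]

lemma BddContinuous.integrable_convolution (hf : BddContinuous f) (hk : Integrable k) (x : E) :
    Integrable fun v => k v • f (x - v) :=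
  (hf.comp_continuous (continuous_sub_left x)).integrable_smul hk

lemma BddContinuous.convolution (hf : BddContinuous f) (hk : Integrable k) :
    BddContinuous (k ⋆ f) := by
  obtain ⟨C, hC⟩ := hf.bounded
  exact ⟨BddAbove.continuous_convolution_right_of_integrable _ ⟨C, forall_mem_range.2 hC⟩ hk
    hf.continuous, C * ∫ v, |k v|, norm_convolution_le hk hC⟩

lemma BddContinuous.convolution_finsetSum {ι : Type*} {t : Finset ι} {f : ι → E → F}
    (hf : ∀ i, BddContinuous (f i)) (hk : Integrable k) (x : E) :
    (k ⋆ fun y => ∑ i ∈ t, f i y) x = ∑ i ∈ t, (k ⋆ f i) x := by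
  simp only [convolution_lsmul, Finset.smul_sum]
  exact integral_finsetSum _ fun i _ => (hf i).integrable_convolution hk x

lemma BddContinuous.convolution_sub_const_mul {f g : E → ℝ} (hf : BddContinuous f)
    (hg : BddContinuous g) (hk : Integrable k) (c : ℝ) (x : E) :
    (k ⋆ fun y => f y - c * g y) x = (k ⋆ f) x - c * (k ⋆ g) x := by
  simp only [convolution_lsmul, smul_eq_mul, mul_sub, mul_left_comm _ c]
  rw [← integral_const_mul]
  exact integral_sub (hf.integrable_convolution hk x)
    ((hg.integrable_convolution hk x).const_mul c)

lemma BddContinuous.convolution_sub {f g : E → ℝ} (hf : BddContinuous f) (hg : BddContinuous g)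
    (hk : Integrable k) (x : E) : (k ⋆ fun y => f y - g y) x = (k ⋆ f) x - (k ⋆ g) x := by
  simpa only [one_mul] using hf.convolution_sub_const_mul hg hk 1 x

lemma abs_convolution_le_mul_convolution {f h l : E → ℝ} {c a : ℝ} (hl : Integrable l)
    (hh : BddContinuous h) (hk : ∀ v, |k v| ≤ c * l v) (hf : ∀ y, |f y| ≤ a * h y) (x : E) :
    |(k ⋆ f) x| ≤ c * a * (l ⋆ h) x := by
  rw [← Real.norm_eq_abs, convolution_lsmul, convolution_lsmul, ← integral_const_mul]
  refine norm_integral_le_of_norm_le ((hh.integrable_convolution hl x).const_mul _)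
    (.of_forall fun v => ?_)
  rw [norm_smul]
  exact (mul_le_mul (hk v) (hf _) (abs_nonneg _) ((abs_nonneg _).trans (hk v))).trans_eq
    (mul_mul_mul_comm c (l v) a (h (x - v)))

lemma two_smul_convolution_of_even [(volume : Measure E).IsNegInvariant] (hf : BddContinuous f)
    (hk : Integrable k) (heven : ∀ v, k (-v) = k v) (x : E) :
    (2 : ℝ) • (k ⋆ f) x = ∫ v, k v • (f (x - v) + f (x + v)) := by
  have hreflect : ∫ v, k v • f (x - v) = ∫ v, k v • f (x + v) := by
    rw [← integral_neg_eq_self]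
    simp only [heven, sub_neg_eq_add]
  simp only [smul_add]
  rw [integral_add (hf.integrable_convolution hk x)
    ((hf.comp_continuous (continuous_const_add x)).integrable_smul hk), ← hreflect,
    convolution_lsmul, two_smul]

variable [NormedSpace ℝ E]

lemma BddContDiffOne.hasFDerivAt_convolution (hf : BddContDiffOne f) (hk : Integrable k) (x : E) :
    HasFDerivAt (k ⋆ f) ((k ⋆ fderiv ℝ f) x) x := by
  obtain ⟨C, hC⟩ := hf.fderiv_bounded
  refine hasFDerivAt_integral_of_dominated_of_fderiv_le (s := univ)
    (F := fun x v => k v • f (x - v)) (F' := fun x v => k v • fderiv ℝ f (x - v))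
    (bound := fun v => C * |k v|) univ_mem
    (.of_forall fun y => (hf.bddContinuous.integrable_convolution hk y).aestronglyMeasurable)
    (hf.bddContinuous.integrable_convolution hk x)
    (hf.bddContinuous_fderiv.integrable_convolution hk x).aestronglyMeasurable
    (.of_forall fun v y _ => ?_) (hk.abs.const_mul C) (.of_forall fun v y _ => ?_)
  · rw [norm_smul, mul_comm]
    exact mul_le_mul_of_nonneg_right (hC _) (abs_nonneg _)
  · exact ((hasFDerivAt_comp_sub v).2 (hf.hasFDerivAt (y - v))).const_smul (k v)

lemma BddContDiffOne.pd_convolution {n : ℕ} {k u : En n → ℝ} (hu : BddContDiffOne u)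
    (hk : Integrable k) (i : Fin n) : pd i (k ⋆ u) = k ⋆ pd i u := by
  funext x
  rw [pd, (hu.hasFDerivAt_convolution hk x).fderiv, convolution_lsmul,
    ContinuousLinearMap.integral_apply (hu.bddContinuous_fderiv.integrable_convolution hk x)]
  rfl

lemma BddContDiffOne.hasLineDerivAt_convolution {n : ℕ} {k u : En n → ℝ} (hu : BddContDiffOne u)
    (hk : Integrable k) (i : Fin n) (x : En n) :
    HasLineDerivAt ℝ (k ⋆ u) ((k ⋆ pd i u) x) x (EuclideanSpace.single i 1) := by
  rw [← hu.pd_convolution hk i]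
  have hdiff := hu.hasFDerivAt_convolution hk x
  simpa only [pd, hdiff.fderiv] using hdiff.hasLineDerivAt _

/- Evenness of the kernel cancels the first-order Taylor term, leaving the second difference. -/
lemma BddContDiffTwo.exists_norm_convolution_sub_le [(volume : Measure E).IsNegInvariant]
    [CompleteSpace F] (hf : BddContDiffTwo f) :
    ∃ M, 0 ≤ M ∧ ∀ k : E → ℝ, Integrable k → (∀ v, k (-v) = k v) → ∀ x,
      ‖(k ⋆ f) x - (∫ v, k v) • f x‖ ≤ M * ∫ v, |k v| * min (‖v‖ ^ 2) 1 := by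
  obtain ⟨M, hM0, hM⟩ := hf.exists_norm_second_difference_le
  refine ⟨M, hM0, fun k hk heven x => ?_⟩
  have hbdd := hf.toBddContDiffOne.bddContinuous
  have htwo : (2 : ℝ) • ((k ⋆ f) x - (∫ v, k v) • f x) =
      ∫ v, k v • (f (x - v) + f (x + v) - (2 : ℝ) • f x) := by
    simp only [smul_sub (k _)]
    rw [smul_sub, two_smul_convolution_of_even hbdd hk heven, smul_comm, ← integral_smul_const,
      integral_sub (((hbdd.comp_continuous (continuous_sub_left x)).add
        (hbdd.comp_continuous (continuous_const_add x))).integrable_smul hk) (hk.smul_const _)]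
  have hbound : ‖(2 : ℝ) • ((k ⋆ f) x - (∫ v, k v) • f x)‖ ≤
      M * ∫ v, |k v| * min (‖v‖ ^ 2) 1 := by
    rw [htwo, ← integral_const_mul]
    refine norm_integral_le_of_norm_le (Integrable.const_mul ?_ M) (.of_forall fun v => ?_)
    · refine BddContinuous.integrable_mul ⟨by fun_prop, 1, fun v => ?_⟩ hk.abs
      rw [Real.norm_of_nonneg (by positivity)]
      exact min_le_right _ _
    · rw [norm_smul, Real.norm_eq_abs, mul_left_comm]
      exact mul_le_mul_of_nonneg_left (hM x v) (abs_nonneg _)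
  rw [norm_smul, Real.norm_two] at hbound
  exact (le_mul_of_one_le_left (norm_nonneg _) one_le_two).trans hbound

lemma hasLineDerivAt_comp_const_sub {E F : Type*} [NormedAddCommGroup E] [NormedSpace ℝ E]
    [NormedAddCommGroup F] [NormedSpace ℝ F] {f : E → F} {f' : F} {x v e : E}
    (hf : HasLineDerivAt ℝ f f' (x - v) e) :
    HasLineDerivAt ℝ (fun v => f (x - v)) (-f') v e := by
  have hline : HasDerivAt (fun t : ℝ => f (x - v + t • e)) f' (-0) := by rwa [neg_zero]
  have hcomp := hline.scomp (0 : ℝ) (hasDerivAt_neg 0)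
  simpa only [HasLineDerivAt, Function.comp_def, neg_smul, one_smul, sub_add_eq_sub_sub,
    ← sub_eq_add_neg] using hcomp

lemma hasLineDerivAt_real_comp {E : Type*} [AddCommGroup E] [Module ℝ E] {φ : ℝ → ℝ} {φ' f' : ℝ}
    {f : E → ℝ} {v e : E} (hφ : HasDerivAt φ φ' (f v)) (hf : HasLineDerivAt ℝ f f' v e) :
    HasLineDerivAt ℝ (fun v => φ (f v)) (φ' * f') v e :=
  hφ.comp_of_eq 0 hf (by rw [zero_smul, add_zero])

lemma hasLineDerivAt_mul {E : Type*} [AddCommGroup E] [Module ℝ E] {f g : E → ℝ} {f' g' : ℝ}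
    {v e : E} (hf : HasLineDerivAt ℝ f f' v e) (hg : HasLineDerivAt ℝ g g' v e) :
    HasLineDerivAt ℝ (fun v => f v * g v) (f' * g v + f v * g') v e := by
  simpa only [HasLineDerivAt, zero_smul, add_zero] using HasDerivAt.fun_mul hf hg

lemma convolution_hasLineDerivAt_hasLineDerivAt_eq [FiniteDimensional ℝ E]
    [(volume : Measure E).IsAddHaarMeasure] {k k' k'' f f' f'' : E → ℝ} {e : E}
    (hk : Integrable k) (hk' : Integrable k') (hk'' : Integrable k'')
    (hf : BddContinuous f) (hf' : BddContinuous f') (hf'' : BddContinuous f'')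
    (hkk' : ∀ v, HasLineDerivAt ℝ k (k' v) v e) (hkk'' : ∀ v, HasLineDerivAt ℝ k' (k'' v) v e)
    (hff' : ∀ v, HasLineDerivAt ℝ f (f' v) v e) (hff'' : ∀ v, HasLineDerivAt ℝ f' (f'' v) v e) :
    k ⋆ f'' = k'' ⋆ f := by
  funext x
  have hfirst : ∫ v, k v * -f'' (x - v) = -∫ v, k' v * f' (x - v) :=
    integral_bilinear_hasLineDerivAt_right_eq_neg_left_of_integrable
      (B := ContinuousLinearMap.mul ℝ ℝ) (hf'.integrable_convolution hk' x)
      (hf''.neg.integrable_convolution hk x)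
      (hf'.integrable_convolution hk x) (fun v _ => hkk' v)
      (fun v _ => hasLineDerivAt_comp_const_sub (hff'' _))
  have hsecond : ∫ v, k' v * -f' (x - v) = -∫ v, k'' v * f (x - v) :=
    integral_bilinear_hasLineDerivAt_right_eq_neg_left_of_integrable
      (B := ContinuousLinearMap.mul ℝ ℝ) (hf.integrable_convolution hk'' x)
      (hf'.neg.integrable_convolution hk' x)
      (hf.integrable_convolution hk' x) (fun v _ => hkk'' v)
      (fun v _ => hasLineDerivAt_comp_const_sub (hff' _))
  simp only [mul_neg, integral_neg, neg_inj] at hfirst hsecond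
  simp only [convolution_lsmul, smul_eq_mul, hfirst, hsecond]

end Convolution

section RadialIntegrals

variable {E : Type*} [NormedAddCommGroup E] [MeasurableSpace E] [BorelSpace E]

lemma integrable_norm_rpow_mul_min [NormedSpace ℝ E] [FiniteDimensional ℝ E] (μ : Measure E)
    [μ.IsAddHaarMeasure] {a : ℝ} (ha : Module.finrank ℝ E < a) (ha2 : a < Module.finrank ℝ E + 2) :
    Integrable (fun v : E => ‖v‖ ^ (-a) * min (‖v‖ ^ 2) 1) μ := by
  cases subsingleton_or_nontrivial E with
  | inl _ =>
    exact (integrable_zero E ℝ μ).congr (.of_forall fun v => by simp [Subsingleton.elim v 0])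
  | inr _ =>
    have hdim : ((Module.finrank ℝ E - 1 : ℕ) : ℝ) = Module.finrank ℝ E - 1 :=
      Nat.cast_pred Module.finrank_pos
    rw [integrable_fun_norm_addHaar μ (f := fun r => r ^ (-a) * min (r ^ 2) 1),
      ← Ioc_union_Ioi_eq_Ioi (zero_le_one' ℝ)]
    refine IntegrableOn.union ?_ ?_
    · have hnear : IntegrableOn (fun r : ℝ => r ^ (Module.finrank ℝ E - 1 - a + 2)) (Ioc 0 1) :=
        (intervalIntegrable_iff_integrableOn_Ioc_of_le zero_le_one).1
          (intervalIntegral.intervalIntegrable_rpow' (by linarith))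
      refine hnear.congr_fun (fun r ⟨hr0, hr1⟩ => ?_) measurableSet_Ioc
      simp only [smul_eq_mul]
      rw [min_eq_left (pow_le_one₀ hr0.le hr1), ← Real.rpow_natCast, ← Real.rpow_natCast,
        ← Real.rpow_add hr0, ← Real.rpow_add hr0, hdim]
      congr 1
      push_cast
      ring
    · have hfar : IntegrableOn (fun r : ℝ => r ^ (Module.finrank ℝ E - 1 - a)) (Ioi 1) :=
        integrableOn_Ioi_rpow_of_lt (by linarith) one_pos
      refine hfar.congr_fun (fun r (hr : 1 < r) => ?_) measurableSet_Ioi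
      simp only [smul_eq_mul]
      rw [min_eq_right (one_le_pow₀ hr.le), mul_one, ← Real.rpow_natCast,
        ← Real.rpow_add (one_pos.trans hr), hdim, sub_eq_add_neg (_ - 1)]

lemma integrable_norm_sub_rpow_mul [NormedSpace ℝ E] [FiniteDimensional ℝ E] (μ : Measure E)
    [μ.IsAddHaarMeasure] {a M : ℝ} {g : E → ℝ} {x : E} (ha : Module.finrank ℝ E < a)
    (ha2 : a < Module.finrank ℝ E + 2) (hg : AEStronglyMeasurable g μ)
    (hM : ∀ y, |g y| ≤ M * min (‖x - y‖ ^ 2) 1) :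
    Integrable (fun y => ‖x - y‖ ^ (-a) * g y) μ := by
  refine (((integrable_norm_rpow_mul_min μ ha ha2).comp_sub_left x).const_mul M).mono'
    ((by fun_prop : Measurable fun y => ‖x - y‖ ^ (-a)).aestronglyMeasurable.mul hg)
    (.of_forall fun y => ?_)
  rw [norm_mul, Real.norm_of_nonneg (by positivity), mul_left_comm]
  exact mul_le_mul_of_nonneg_left (hM y) (by positivity)

lemma integrable_norm_sq_add_sq_rpow_neg [NormedSpace ℝ E] [FiniteDimensional ℝ E] (μ : Measure E)
    [μ.IsAddHaarMeasure] {b z : ℝ} (hb : (Module.finrank ℝ E : ℝ) / 2 < b) (hz : 0 < z) :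
    Integrable (fun v : E => (‖v‖ ^ 2 + z ^ 2) ^ (-b)) μ := by
  have hunit := integrable_rpow_neg_one_add_norm_sq (E := E) (μ := μ) (r := 2 * b) (by linarith)
  refine ((hunit.comp_smul (inv_ne_zero hz.ne')).const_mul ((z ^ 2) ^ (-b))).congr
    (.of_forall fun v => ?_)
  simp only [norm_smul, norm_inv, Real.norm_of_nonneg hz.le]
  rw [show -(2 * b) / 2 = -b by ring, ← Real.mul_rpow (by positivity) (by positivity)]
  congr 1
  field_simp
  ring

lemma Gamma_mul_rpow_neg_eq_integral {b r : ℝ} (hb : 0 < b) (hr : 0 < r) :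
    Real.Gamma b * r ^ (-b) = ∫ t in Ioi (0 : ℝ), t ^ (b - 1) * Real.exp (-(r * t)) := by
  rw [Real.integral_rpow_mul_exp_neg_mul_Ioi hb hr, Real.rpow_neg hr.le, one_div,
    Real.inv_rpow hr.le, mul_comm]

lemma integral_rpow_mul_exp_neg_norm_sq_add_sq [InnerProductSpace ℝ E] [FiniteDimensional ℝ E]
    (b z : ℝ) {t : ℝ} (ht : 0 < t) :
    ∫ v : E, t ^ (b - 1) * Real.exp (-((‖v‖ ^ 2 + z ^ 2) * t)) =
      Real.pi ^ ((Module.finrank ℝ E : ℝ) / 2) *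
        (t ^ (b - (Module.finrank ℝ E : ℝ) / 2 - 1) * Real.exp (-(z ^ 2 * t))) := by
  have hsplit : ∀ v : E, t ^ (b - 1) * Real.exp (-((‖v‖ ^ 2 + z ^ 2) * t)) =
      t ^ (b - 1) * Real.exp (-(z ^ 2 * t)) * Real.exp (-t * ‖v‖ ^ 2) := fun v => by
    rw [mul_assoc, ← Real.exp_add]
    ring_nf
  simp only [hsplit]
  rw [integral_const_mul, GaussianFourier.integral_rexp_neg_mul_sq_norm ht,
    Real.div_rpow Real.pi_pos.le ht.le, sub_right_comm b, Real.rpow_sub ht (b - 1)]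
  ring

variable [InnerProductSpace ℝ E] [FiniteDimensional ℝ E] {b z : ℝ}

lemma integrable_rpow_mul_exp_neg_norm_sq_add_sq (hb : (Module.finrank ℝ E : ℝ) / 2 < b)
    (hz : 0 < z) :
    Integrable (fun p : E × ℝ => p.2 ^ (b - 1) * Real.exp (-((‖p.1‖ ^ 2 + z ^ 2) * p.2)))
      ((volume : Measure E).prod (volume.restrict (Ioi (0 : ℝ)))) := by
  have hb0 : 0 < b := lt_of_le_of_lt (by positivity) hb
  have hpos : ∀ v : E, 0 < ‖v‖ ^ 2 + z ^ 2 := fun v => by positivity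
  refine (integrable_prod_iff (Measurable.aestronglyMeasurable (by fun_prop))).2
    ⟨.of_forall fun v => ?_, ?_⟩
  · have hGamma := integrableOn_rpow_mul_exp_neg_mul_rpow (p := 1) (s := b - 1) (by linarith)
      one_pos (hpos v)
    simpa only [IntegrableOn, Real.rpow_one, neg_mul] using hGamma
  · refine ((integrable_norm_sq_add_sq_rpow_neg volume hb hz).const_mul (Real.Gamma b)).congr
      (.of_forall fun v => ?_)
    simp only [Gamma_mul_rpow_neg_eq_integral hb0 (hpos v)]
    refine setIntegral_congr_fun measurableSet_Ioi fun t (ht : 0 < t) => ?_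
    exact (Real.norm_of_nonneg (by positivity)).symm

lemma integral_norm_sq_add_sq_rpow_neg (hb : (Module.finrank ℝ E : ℝ) / 2 < b) (hz : 0 < z) :
    ∫ v : E, (‖v‖ ^ 2 + z ^ 2) ^ (-b) =
      Real.pi ^ ((Module.finrank ℝ E : ℝ) / 2) * Real.Gamma (b - (Module.finrank ℝ E : ℝ) / 2) /
        Real.Gamma b * (z ^ 2) ^ ((Module.finrank ℝ E : ℝ) / 2 - b) := by
  have hb0 : 0 < b := lt_of_le_of_lt (by positivity) hb
  have hpos : ∀ v : E, 0 < ‖v‖ ^ 2 + z ^ 2 := fun v => by positivity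
  have hswap : Real.Gamma b * ∫ v : E, (‖v‖ ^ 2 + z ^ 2) ^ (-b) =
      ∫ t in Ioi (0 : ℝ), ∫ v : E, t ^ (b - 1) * Real.exp (-((‖v‖ ^ 2 + z ^ 2) * t)) := by
    simp only [← integral_const_mul, Gamma_mul_rpow_neg_eq_integral hb0 (hpos _)]
    exact integral_integral_swap (integrable_rpow_mul_exp_neg_norm_sq_add_sq hb hz)
  rw [setIntegral_congr_fun measurableSet_Ioi fun t ht =>
      integral_rpow_mul_exp_neg_norm_sq_add_sq b z ht, integral_const_mul,
    ← Gamma_mul_rpow_neg_eq_integral (sub_pos.2 hb) (sq_pos_of_pos hz), neg_sub] at hswap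
  rw [div_mul_eq_mul_div, eq_div_iff (Real.Gamma_pos_of_pos hb0).ne', mul_comm, hswap, mul_assoc]

end RadialIntegrals

section ParametricKernels

/-- Near `z₀` the functions `k z` are dominated by a single integrable function, as is needed to
differentiate `∫ v, k z v` at `z₀`. -/
def LocallyDominated {E : Type*} [MeasureSpace E] (k : ℝ → E → ℝ) (z₀ : ℝ) : Prop :=
  ∃ G : E → ℝ, Integrable G ∧ ∀ᶠ z in 𝓝 z₀, ∀ v, |k z v| ≤ G v

namespace LocallyDominated

variable {E : Type*} [MeasureSpace E] {k k' : ℝ → E → ℝ} {z₀ : ℝ}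

lemma add (hk : LocallyDominated k z₀) (hk' : LocallyDominated k' z₀) :
    LocallyDominated (fun z v => k z v + k' z v) z₀ := by
  obtain ⟨G, hG, hkG⟩ := hk
  obtain ⟨G', hG', hkG'⟩ := hk'
  refine ⟨fun v => G v + G' v, hG.add hG', ?_⟩
  filter_upwards [hkG, hkG'] with z hz hz' v
  exact (abs_add_le _ _).trans (add_le_add (hz v) (hz' v))

lemma mono {g : ℝ → ℝ} (hk : LocallyDominated k z₀) (hg : ContinuousAt g z₀)
    (hle : ∀ᶠ z in 𝓝 z₀, ∀ v, |k' z v| ≤ g z * |k z v|) : LocallyDominated k' z₀ := by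
  obtain ⟨G, hG, hkG⟩ := hk
  refine ⟨fun v => (|g z₀| + 1) * G v, hG.const_mul _, ?_⟩
  filter_upwards [hg.abs.eventually_lt continuousAt_const (lt_add_one |g z₀|), hkG, hle]
    with z hgz hkz hz v
  exact (hz v).trans (mul_le_mul ((le_abs_self _).trans hgz.le) (hkz v) (abs_nonneg _)
    (by positivity))

lemma mul {w : ℝ → E → ℝ} (hk : LocallyDominated k z₀)
    (hw : ∃ C, ∀ᶠ z in 𝓝 z₀, ∀ v, |w z v| ≤ C) :
    LocallyDominated (fun z v => k z v * w z v) z₀ := by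
  obtain ⟨C, hC⟩ := hw
  refine hk.mono (continuousAt_const (y := C)) (hC.mono fun z hz v => ?_)
  rw [abs_mul, mul_comm]
  exact mul_le_mul_of_nonneg_right (hz v) (abs_nonneg _)

end LocallyDominated

lemma exists_eventually_abs_mul_le {E : Type*} {f g : ℝ → E → ℝ} {z₀ : ℝ}
    (hf : ∃ C, ∀ᶠ z in 𝓝 z₀, ∀ y, |f z y| ≤ C)
    (hg : ∃ C, ∀ᶠ z in 𝓝 z₀, ∀ y, |g z y| ≤ C) :
    ∃ C, ∀ᶠ z in 𝓝 z₀, ∀ y, |f z y * g z y| ≤ C := by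
  obtain ⟨C, hC⟩ := hf
  obtain ⟨D, hD⟩ := hg
  refine ⟨C * D, ?_⟩
  filter_upwards [hC, hD] with z hfz hgz y
  rw [abs_mul]
  exact mul_le_mul (hfz y) (hgz y) (abs_nonneg _) ((abs_nonneg _).trans (hfz y))

/-- Near `z₀` the kernels `k z` are measurable and dominated by an integrable function, and so are
their derivatives `k' z` in the parameter; such a family may be differentiated under the integral
sign. -/
structure HasDominatedDerivAt {E : Type*} [MeasureSpace E] (k k' : ℝ → E → ℝ) (z₀ : ℝ) :
    Prop where
  aestronglyMeasurable : ∀ᶠ z in 𝓝 z₀, AEStronglyMeasurable (k z)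
  locallyDominated : LocallyDominated k z₀
  aestronglyMeasurable_deriv : AEStronglyMeasurable (k' z₀)
  locallyDominated_deriv : LocallyDominated k' z₀
  hasDerivAt : ∀ᶠ z in 𝓝 z₀, ∀ v, HasDerivAt (fun z => k z v) (k' z v) z

/-- Near `z₀` the functions `f z` are continuous and bounded uniformly in `z`, and so are their
derivatives `f' z` in the parameter; such a family may be paired with one satisfying
`HasDominatedDerivAt`. -/
structure HasBoundedDerivAt {E : Type*} [TopologicalSpace E] (f f' : ℝ → E → ℝ) (z₀ : ℝ) :
    Prop where
  continuous : ∀ᶠ z in 𝓝 z₀, Continuous (f z)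
  bounded : ∃ C, ∀ᶠ z in 𝓝 z₀, ∀ y, |f z y| ≤ C
  continuous_deriv : Continuous (f' z₀)
  bounded_deriv : ∃ C, ∀ᶠ z in 𝓝 z₀, ∀ y, |f' z y| ≤ C
  hasDerivAt : ∀ᶠ z in 𝓝 z₀, ∀ y, HasDerivAt (fun z => f z y) (f' z y) z

namespace HasBoundedDerivAt

variable {E : Type*} [TopologicalSpace E] {f f' g g' : ℝ → E → ℝ} {z₀ : ℝ}

lemma bddContinuous (hf : HasBoundedDerivAt f f' z₀) : BddContinuous (f z₀) :=
  ⟨hf.continuous.self_of_nhds, hf.bounded.imp fun _ hC => hC.self_of_nhds⟩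

lemma bddContinuous_deriv (hf : HasBoundedDerivAt f f' z₀) : BddContinuous (f' z₀) :=
  ⟨hf.continuous_deriv, hf.bounded_deriv.imp fun _ hC => hC.self_of_nhds⟩

lemma mul (hf : HasBoundedDerivAt f f' z₀) (hg : HasBoundedDerivAt g g' z₀) :
    HasBoundedDerivAt (fun z y => f z y * g z y) (fun z y => f' z y * g z y + f z y * g' z y)
      z₀ where
  continuous := (hf.continuous.and hg.continuous).mono fun _ hz => hz.1.mul hz.2
  bounded := exists_eventually_abs_mul_le hf.bounded hg.bounded
  continuous_deriv := (hf.continuous_deriv.mul hg.continuous.self_of_nhds).add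
    (hf.continuous.self_of_nhds.mul hg.continuous_deriv)
  bounded_deriv := by
    obtain ⟨C, hC⟩ := exists_eventually_abs_mul_le hf.bounded_deriv hg.bounded
    obtain ⟨D, hD⟩ := exists_eventually_abs_mul_le hf.bounded hg.bounded_deriv
    refine ⟨C + D, (hC.and hD).mono fun z hz y => ?_⟩
    exact (abs_add_le _ _).trans (add_le_add (hz.1 y) (hz.2 y))
  hasDerivAt := (hf.hasDerivAt.and hg.hasDerivAt).mono fun z hz y => (hz.1 y).mul (hz.2 y)

lemma comp {φ : ℝ → ℝ} (hφ : ContDiff ℝ 1 φ) (hf : HasBoundedDerivAt f f' z₀) :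
    HasBoundedDerivAt (fun z y => φ (f z y)) (fun z y => deriv φ (f z y) * f' z y) z₀ := by
  have hφ' := hφ.continuous_deriv le_rfl
  obtain ⟨M, hM⟩ := hf.bounded
  refine ⟨hf.continuous.mono fun _ hz => hφ.continuous.comp hz, ?_,
    (hφ'.comp hf.continuous.self_of_nhds).mul hf.continuous_deriv,
    exists_eventually_abs_mul_le ?_ hf.bounded_deriv, hf.hasDerivAt.mono fun z hz y =>
      (hφ.differentiable one_ne_zero _).hasDerivAt.comp z (hz y)⟩
  · obtain ⟨K, hK⟩ := exists_abs_le_of_continuous hφ.continuous M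
    exact ⟨K, hM.mono fun z hz y => hK _ (hz y)⟩
  · obtain ⟨K, hK⟩ := exists_abs_le_of_continuous hφ' M
    exact ⟨K, hM.mono fun z hz y => hK _ (hz y)⟩

lemma comp_const_sub {E : Type*} [TopologicalSpace E] [AddGroup E] [ContinuousSub E]
    {f f' : ℝ → E → ℝ} {z₀ : ℝ} (hf : HasBoundedDerivAt f f' z₀) (x : E) :
    HasBoundedDerivAt (fun z v => f z (x - v)) (fun z v => f' z (x - v)) z₀ where
  continuous := hf.continuous.mono fun _ hz => hz.comp (continuous_sub_left x)
  bounded := hf.bounded.imp fun _ hC => hC.mono fun _ hz _ => hz _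
  continuous_deriv := hf.continuous_deriv.comp (continuous_sub_left x)
  bounded_deriv := hf.bounded_deriv.imp fun _ hC => hC.mono fun _ hz _ => hz _
  hasDerivAt := hf.hasDerivAt.mono fun _ hz _ => hz _

lemma const {E : Type*} [TopologicalSpace E] {f : E → ℝ} (hf : BddContinuous f) (z₀ : ℝ) :
    HasBoundedDerivAt (fun _ => f) (fun _ _ => 0) z₀ where
  continuous := .of_forall fun _ => hf.continuous
  bounded := hf.bounded.imp fun _ hC => .of_forall fun _ => hC
  continuous_deriv := continuous_const
  bounded_deriv := ⟨0, .of_forall fun _ _ => abs_zero.le⟩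
  hasDerivAt := .of_forall fun _ _ => hasDerivAt_const _ _

end HasBoundedDerivAt

namespace HasDominatedDerivAt

variable {E : Type*} [MeasureSpace E] {k k' : ℝ → E → ℝ} {z₀ : ℝ}

lemma integrable (hk : HasDominatedDerivAt k k' z₀) : Integrable (k z₀) := by
  obtain ⟨G, hG, hkG⟩ := hk.locallyDominated
  exact hG.mono' hk.aestronglyMeasurable.self_of_nhds (.of_forall hkG.self_of_nhds)

lemma integrable_deriv (hk : HasDominatedDerivAt k k' z₀) : Integrable (k' z₀) := by
  obtain ⟨G, hG, hkG⟩ := hk.locallyDominated_deriv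
  exact hG.mono' hk.aestronglyMeasurable_deriv (.of_forall hkG.self_of_nhds)

lemma hasDerivAt_integral (hk : HasDominatedDerivAt k k' z₀) :
    HasDerivAt (fun z => ∫ v, k z v) (∫ v, k' z₀ v) z₀ := by
  obtain ⟨G, hG, hkG⟩ := hk.locallyDominated_deriv
  exact (hasDerivAt_integral_of_dominated_loc_of_deriv_le (hkG.and hk.hasDerivAt)
    hk.aestronglyMeasurable hk.integrable hk.aestronglyMeasurable_deriv
    (.of_forall fun v z hz => hz.1 v) hG (.of_forall fun v z hz => hz.2 v)).2

variable [TopologicalSpace E] [OpensMeasurableSpace E]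

lemma mul {f f' : ℝ → E → ℝ} (hk : HasDominatedDerivAt k k' z₀) (hf : HasBoundedDerivAt f f' z₀) :
    HasDominatedDerivAt (fun z v => k z v * f z v) (fun z v => k' z v * f z v + k z v * f' z v)
      z₀ where
  aestronglyMeasurable := (hk.aestronglyMeasurable.and hf.continuous).mono fun _ hz =>
    hz.1.mul hz.2.aestronglyMeasurable
  locallyDominated := hk.locallyDominated.mul hf.bounded
  aestronglyMeasurable_deriv :=
    (hk.aestronglyMeasurable_deriv.mul hf.continuous.self_of_nhds.aestronglyMeasurable).add
      (hk.aestronglyMeasurable.self_of_nhds.mul hf.continuous_deriv.aestronglyMeasurable)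
  locallyDominated_deriv :=
    (hk.locallyDominated_deriv.mul hf.bounded).add (hk.locallyDominated.mul hf.bounded_deriv)
  hasDerivAt := (hk.hasDerivAt.and hf.hasDerivAt).mono fun _ hz v => (hz.1 v).mul (hz.2 v)

end HasDominatedDerivAt

lemma LocallyDominated.exists_eventually_abs_convolution_le {E : Type*} [NormedAddCommGroup E]
    [MeasureSpace E] {k : ℝ → E → ℝ} {f : E → ℝ} {z₀ : ℝ}
    (hk : LocallyDominated k z₀) (hmeas : ∀ᶠ z in 𝓝 z₀, AEStronglyMeasurable (k z))
    (hf : BddContinuous f) : ∃ C, ∀ᶠ z in 𝓝 z₀, ∀ x, |(k z ⋆ f) x| ≤ C := by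
  obtain ⟨G, hG, hkG⟩ := hk
  obtain ⟨C, hC⟩ := hf.bounded
  refine ⟨C * ∫ v, G v, ?_⟩
  filter_upwards [hmeas, hkG] with z hz hkz x
  have hint : Integrable (k z) := hG.mono' hz (.of_forall hkz)
  exact (norm_convolution_le (f := f) hint hC x).trans (mul_le_mul_of_nonneg_left
    (integral_mono hint.abs hG hkz) ((abs_nonneg _).trans (hC x)))

variable {E : Type*} [NormedAddCommGroup E] [MeasureSpace E] [BorelSpace E]
  [SecondCountableTopology E] {k k' f f' : ℝ → E → ℝ} {z₀ : ℝ}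

lemma HasDominatedDerivAt.hasDerivAt_convolution (hk : HasDominatedDerivAt k k' z₀)
    (hf : HasBoundedDerivAt f f' z₀) (x : E) :
    HasDerivAt (fun z => (k z ⋆ f z) x) ((k' z₀ ⋆ f z₀) x + (k z₀ ⋆ f' z₀) x) z₀ := by
  refine (hk.mul (hf.comp_const_sub x)).hasDerivAt_integral.congr_deriv ?_
  exact integral_add (hf.bddContinuous.integrable_convolution hk.integrable_deriv x)
    (hf.bddContinuous_deriv.integrable_convolution hk.integrable x)

lemma HasDominatedDerivAt.hasBoundedDerivAt_convolution {f : E → ℝ}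
    (hk : ∀ᶠ z in 𝓝 z₀, HasDominatedDerivAt k k' z) (hf : BddContinuous f) :
    HasBoundedDerivAt (fun z => k z ⋆ f) (fun z => k' z ⋆ f) z₀ where
  continuous := hk.mono fun z hz => (hf.convolution hz.integrable).continuous
  bounded := hk.self_of_nhds.locallyDominated.exists_eventually_abs_convolution_le
    hk.self_of_nhds.aestronglyMeasurable hf
  continuous_deriv := (hf.convolution hk.self_of_nhds.integrable_deriv).continuous
  bounded_deriv := hk.self_of_nhds.locallyDominated_deriv.exists_eventually_abs_convolution_le
    (hk.mono fun z hz => hz.aestronglyMeasurable_deriv) hf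
  hasDerivAt := hk.mono fun z hz x => by
    refine (hz.hasDerivAt_convolution (.const hf z) x).congr_deriv ?_
    simp only [convolution_lsmul, smul_zero, integral_zero, add_zero]

end ParametricKernels

section PoissonKernel

variable {n : ℕ} {s z : ℝ}

/-- The conormal derivative `z^{1-2s} ∂_z P_z^{(s)}` of the fractional Poisson kernel. -/
def conormalPker (n : ℕ) (s z : ℝ) (v : En n) : ℝ :=
  pns n s * (2 * s - ((n : ℝ) + 2 * s) * z ^ 2 / (‖v‖ ^ 2 + z ^ 2)) *
    (‖v‖ ^ 2 + z ^ 2) ^ (-((n : ℝ) + 2 * s) / 2)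

/-- The partial derivative `∂_i P_z^{(s)}` of the fractional Poisson kernel. -/
def pdPker (n : ℕ) (s z : ℝ) (i : Fin n) (v : En n) : ℝ :=
  -((n : ℝ) + 2 * s) * v i / (‖v‖ ^ 2 + z ^ 2) * Pker n s z v

/-- The second partial derivative `∂_i ∂_i P_z^{(s)}` of the fractional Poisson kernel. -/
def pdpdPker (n : ℕ) (s z : ℝ) (i : Fin n) (v : En n) : ℝ :=
  ((n : ℝ) + 2 * s) / (‖v‖ ^ 2 + z ^ 2) *
    (((n : ℝ) + 2 * s + 2) * v i ^ 2 / (‖v‖ ^ 2 + z ^ 2) - 1) * Pker n s z v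

lemma pns_pos (n : ℕ) (hs0 : 0 < s) : 0 < pns n s := by
  have hGamma : 0 < Real.Gamma ((n : ℝ) / 2 + s) := Real.Gamma_pos_of_pos (by positivity)
  exact div_pos hGamma (mul_pos (by positivity) (Real.Gamma_pos_of_pos hs0))

lemma norm_sq_add_sq_pos (hz : 0 < z) (v : En n) : 0 < ‖v‖ ^ 2 + z ^ 2 := by positivity

lemma Pker_pos (hs0 : 0 < s) (hz : 0 < z) (v : En n) : 0 < Pker n s z v :=
  mul_pos (mul_pos (pns_pos n hs0) (by positivity))
    (Real.rpow_pos_of_pos (norm_sq_add_sq_pos hz v) _)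

lemma Pker_neg (v : En n) : Pker n s z (-v) = Pker n s z v := by
  simp only [Pker, norm_neg]

lemma conormalPker_neg (v : En n) : conormalPker n s z (-v) = conormalPker n s z v := by
  simp only [conormalPker, norm_neg]

lemma continuous_norm_sq_add_sq_rpow (hz : 0 < z) (a : ℝ) :
    Continuous fun v : En n => (‖v‖ ^ 2 + z ^ 2) ^ a :=
  Continuous.rpow_const (by fun_prop) fun v => Or.inl (norm_sq_add_sq_pos hz v).ne'

lemma continuous_Pker (hz : 0 < z) : Continuous (Pker n s z) :=
  continuous_const.mul (continuous_norm_sq_add_sq_rpow hz _)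

lemma continuous_conormalPker (hz : 0 < z) : Continuous (conormalPker n s z) :=
  (continuous_const.mul (continuous_const.sub (continuous_const.div (by fun_prop)
    fun v => (norm_sq_add_sq_pos hz v).ne'))).mul (continuous_norm_sq_add_sq_rpow hz _)

lemma continuous_pdPker (hz : 0 < z) (i : Fin n) : Continuous (pdPker n s z i) :=
  ((Continuous.div (by fun_prop) (by fun_prop) fun v => (norm_sq_add_sq_pos hz v).ne')).mul
    (continuous_Pker hz)

lemma continuous_pdpdPker (hz : 0 < z) (i : Fin n) : Continuous (pdpdPker n s z i) :=
  ((Continuous.div (by fun_prop) (by fun_prop) fun v => (norm_sq_add_sq_pos hz v).ne').mul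
    ((Continuous.div (by fun_prop) (by fun_prop) fun v => (norm_sq_add_sq_pos hz v).ne').sub
      continuous_const)).mul (continuous_Pker hz)

lemma hasDerivAt_norm_sq_add_sq_rpow (hz : 0 < z) (v : En n) (a : ℝ) :
    HasDerivAt (fun z => (‖v‖ ^ 2 + z ^ 2) ^ a)
      (2 * a * z / (‖v‖ ^ 2 + z ^ 2) * (‖v‖ ^ 2 + z ^ 2) ^ a) z := by
  have hρ := norm_sq_add_sq_pos hz v
  have hsq : HasDerivAt (fun z : ℝ => ‖v‖ ^ 2 + z ^ 2) (2 * z) z := by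
    simpa using (hasDerivAt_pow 2 z).const_add (‖v‖ ^ 2)
  refine (hsq.rpow_const (Or.inl hρ.ne')).congr_deriv ?_
  rw [Real.rpow_sub_one hρ.ne']
  ring

lemma hasDerivAt_Pker (hz : 0 < z) (v : En n) :
    HasDerivAt (fun z => Pker n s z v) (z ^ (2 * s - 1) * conormalPker n s z v) z := by
  have hpow := (Real.hasDerivAt_rpow_const (p := 2 * s) (Or.inl hz.ne')).const_mul (pns n s)
  refine (hpow.mul (hasDerivAt_norm_sq_add_sq_rpow hz v _)).congr_deriv ?_
  rw [conormalPker, Real.rpow_sub_one hz.ne']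
  have hρ := (norm_sq_add_sq_pos hz v).ne'
  field_simp
  ring

/- The extension equation: the weighted divergence of `z^{1-2s} (∇_x P, ∂_z P)` vanishes. -/
lemma hasDerivAt_conormalPker (hz : 0 < z) (v : En n) :
    HasDerivAt (fun z => conormalPker n s z v)
      (-z ^ (1 - 2 * s) * ∑ i, pdpdPker n s z i v) z := by
  have hρ := (norm_sq_add_sq_pos hz v).ne'
  have hsq : HasDerivAt (fun z : ℝ => z ^ 2) (2 * z) z := by simpa using hasDerivAt_pow 2 z
  have hfrac := (hsq.const_mul ((n : ℝ) + 2 * s)).div (hsq.const_add (‖v‖ ^ 2)) hρ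
  refine (((hfrac.const_sub (2 * s)).const_mul (pns n s)).mul
    (hasDerivAt_norm_sq_add_sq_rpow hz v _)).congr_deriv ?_
  have hsum : ∑ i, pdpdPker n s z i v = ((n : ℝ) + 2 * s) / (‖v‖ ^ 2 + z ^ 2) *
      (((n : ℝ) + 2 * s + 2) * ‖v‖ ^ 2 / (‖v‖ ^ 2 + z ^ 2) - n) * Pker n s z v := by
    simp only [pdpdPker, ← Finset.sum_mul, ← Finset.mul_sum, Finset.sum_sub_distrib,
      ← Finset.sum_div, EuclideanSpace.real_norm_sq_eq]
    simp
  have hz1 : z ^ (1 - 2 * s) * z ^ (2 * s) = z := by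
    rw [← Real.rpow_add hz, sub_add_cancel, Real.rpow_one]
  have hprod : ∀ a b c : ℝ, -z ^ (1 - 2 * s) * (a * (b * z ^ (2 * s) * c)) = -(z * (a * b * c)) :=
    fun a b c => by linear_combination (-(a * b * c)) * hz1
  rw [hsum, Pker, hprod]
  simp only [Pi.div_apply]
  field_simp
  ring

lemma hasLineDerivAt_norm_sq_add_sq (v : En n) (i : Fin n) :
    HasLineDerivAt ℝ (fun v : En n => ‖v‖ ^ 2 + z ^ 2) (2 * v i) v (EuclideanSpace.single i 1) := by
  have hsq := ((hasStrictFDerivAt_norm_sq v).hasFDerivAt.add_const (z ^ 2)).hasLineDerivAt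
    (EuclideanSpace.single i (1 : ℝ))
  simpa [EuclideanSpace.inner_single_right, two_mul] using hsq

lemma hasLineDerivAt_coord (v : En n) (i : Fin n) :
    HasLineDerivAt ℝ (fun v : En n => v i) 1 v (EuclideanSpace.single i 1) := by
  simpa using (EuclideanSpace.proj (𝕜 := ℝ) i).hasFDerivAt.hasLineDerivAt (x := v)
    (EuclideanSpace.single i (1 : ℝ))

lemma hasLineDerivAt_Pker (hz : 0 < z) (v : En n) (i : Fin n) :
    HasLineDerivAt ℝ (Pker n s z) (pdPker n s z i v) v (EuclideanSpace.single i 1) := by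
  have hρ := (norm_sq_add_sq_pos hz v).ne'
  have hsq : HasDerivAt (fun t : ℝ => ‖v + t • EuclideanSpace.single i (1 : ℝ)‖ ^ 2 + z ^ 2) _ 0 :=
    hasLineDerivAt_norm_sq_add_sq v i
  refine ((hsq.rpow_const (p := -((n : ℝ) + 2 * s) / 2) (Or.inl ?_)).const_mul
    (pns n s * z ^ (2 * s))).congr_deriv ?_
  · simpa only [zero_smul, add_zero] using hρ
  · simp only [zero_smul, add_zero, pdPker, Pker]
    rw [Real.rpow_sub_one hρ]
    field_simp

lemma hasLineDerivAt_pdPker (hz : 0 < z) (v : En n) (i : Fin n) :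
    HasLineDerivAt ℝ (pdPker n s z i) (pdpdPker n s z i v) v (EuclideanSpace.single i 1) := by
  have hρ := (norm_sq_add_sq_pos hz v).ne'
  have hsq : HasDerivAt (fun t : ℝ => ‖v + t • EuclideanSpace.single i (1 : ℝ)‖ ^ 2 + z ^ 2) _ 0 :=
    hasLineDerivAt_norm_sq_add_sq v i
  have hcoord : HasDerivAt (fun t : ℝ => (v + t • EuclideanSpace.single i (1 : ℝ)) i) _ 0 :=
    hasLineDerivAt_coord v i
  refine (((hcoord.const_mul (-((n : ℝ) + 2 * s))).div hsq ?_).mul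
    (hasLineDerivAt_Pker (s := s) hz v i)).congr_deriv ?_
  · simpa only [zero_smul, add_zero] using hρ
  · simp only [zero_smul, add_zero, pdPker, pdpdPker, Pi.div_apply]
    field_simp
    ring

end PoissonKernel

section PoissonKernelEstimates

variable {n : ℕ} {s z : ℝ}

lemma abs_sub_mul_le {c N t : ℝ} (hc : 0 ≤ c) (hcN : c ≤ N) (ht0 : 0 ≤ t) (ht1 : t ≤ 1) :
    |c - N * t| ≤ N :=
  abs_le.2 ⟨by nlinarith, by nlinarith⟩

lemma abs_conormalPker_le (hs0 : 0 < s) (hz : 0 < z) (v : En n) :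
    |conormalPker n s z v| ≤ ((n : ℝ) + 2 * s) * z ^ (-(2 * s)) * Pker n s z v := by
  have hp := pns_pos n hs0
  have hρ := norm_sq_add_sq_pos hz v
  have hcoef : |2 * s - ((n : ℝ) + 2 * s) * (z ^ 2 / (‖v‖ ^ 2 + z ^ 2))| ≤ (n : ℝ) + 2 * s :=
    abs_sub_mul_le (by positivity) (le_add_of_nonneg_left n.cast_nonneg) (by positivity)
      ((div_le_one hρ).2 (le_add_of_nonneg_left (sq_nonneg _)))
  have hcancel : z ^ (-(2 * s)) * Pker n s z v =
      pns n s * (‖v‖ ^ 2 + z ^ 2) ^ (-((n : ℝ) + 2 * s) / 2) := by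
    rw [Pker, mul_right_comm, mul_left_comm, ← Real.rpow_add hz, neg_add_cancel, Real.rpow_zero,
      mul_one]
  rw [mul_assoc ((n : ℝ) + 2 * s), hcancel, conormalPker, mul_right_comm, abs_mul,
    abs_of_pos (mul_pos hp (Real.rpow_pos_of_pos hρ _)), mul_comm, mul_div_assoc]
  exact mul_le_mul_of_nonneg_right hcoef (mul_pos hp (Real.rpow_pos_of_pos hρ _)).le

lemma abs_pdPker_le (hs0 : 0 < s) (hz : 0 < z) (i : Fin n) (v : En n) :
    |pdPker n s z i v| ≤ ((n : ℝ) + 2 * s) / z * Pker n s z v := by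
  have hρ := norm_sq_add_sq_pos hz v
  have hcoord : |v i| * z ≤ ‖v‖ ^ 2 + z ^ 2 := by
    nlinarith [PiLp.norm_apply_le v i, Real.norm_eq_abs (v i), sq_nonneg (‖v‖ - z), norm_nonneg v]
  rw [pdPker, abs_mul, abs_of_pos (Pker_pos hs0 hz v), abs_div, abs_of_pos hρ, abs_mul, abs_neg,
    abs_of_pos (by positivity : 0 < (n : ℝ) + 2 * s), mul_div_assoc, div_eq_mul_one_div _ z]
  refine mul_le_mul_of_nonneg_right (mul_le_mul_of_nonneg_left ?_ (by positivity))
    (Pker_pos hs0 hz v).le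
  rwa [div_le_div_iff₀ hρ hz, one_mul]

lemma abs_pdpdPker_le (hs0 : 0 < s) (hz : 0 < z) (i : Fin n) (v : En n) :
    |pdpdPker n s z i v| ≤
      ((n : ℝ) + 2 * s) / z ^ 2 * ((n : ℝ) + 2 * s + 2) * Pker n s z v := by
  have hρ := norm_sq_add_sq_pos hz v
  have hcoord : v i ^ 2 ≤ ‖v‖ ^ 2 + z ^ 2 := by
    rw [← sq_abs, ← Real.norm_eq_abs]
    nlinarith [PiLp.norm_apply_le v i, norm_nonneg (v i), norm_nonneg v]
  have hcoef : |1 - ((n : ℝ) + 2 * s + 2) * (v i ^ 2 / (‖v‖ ^ 2 + z ^ 2))| ≤ (n : ℝ) + 2 * s + 2 :=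
    abs_sub_mul_le zero_le_one (by linarith [(n.cast_nonneg : (0 : ℝ) ≤ n)]) (by positivity)
      ((div_le_one hρ).2 hcoord)
  rw [pdpdPker, abs_mul, abs_mul, abs_of_pos (Pker_pos hs0 hz v), abs_sub_comm, mul_div_assoc,
    abs_of_pos (by positivity)]
  refine mul_le_mul_of_nonneg_right (mul_le_mul ?_ hcoef (abs_nonneg _) (by positivity))
    (Pker_pos hs0 hz v).le
  gcongr
  exact le_add_of_nonneg_left (sq_nonneg _)

lemma norm_sq_rpow_half {E : Type*} [SeminormedAddGroup E] (v : E) (a : ℝ) :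
    (‖v‖ ^ 2) ^ (a / 2) = ‖v‖ ^ a := by
  rw [← Real.rpow_natCast_mul (norm_nonneg v)]
  congr 1
  push_cast
  ring

lemma norm_sq_add_sq_rpow_le (hs0 : 0 < s) {v : En n} (hv : v ≠ 0) :
    (‖v‖ ^ 2 + z ^ 2) ^ (-((n : ℝ) + 2 * s) / 2) ≤ ‖v‖ ^ (-((n : ℝ) + 2 * s)) := by
  have hv0 : 0 < ‖v‖ := norm_pos_iff.2 hv
  calc (‖v‖ ^ 2 + z ^ 2) ^ (-((n : ℝ) + 2 * s) / 2)
      ≤ (‖v‖ ^ 2) ^ (-((n : ℝ) + 2 * s) / 2) :=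
        Real.rpow_le_rpow_of_nonpos (pow_pos hv0 2) (le_add_of_nonneg_right (sq_nonneg z))
          (by have := n.cast_nonneg (α := ℝ); linarith)
    _ = ‖v‖ ^ (-((n : ℝ) + 2 * s)) := norm_sq_rpow_half v _

lemma Pker_le (hs0 : 0 < s) {v : En n} (hv : v ≠ 0) (hz : 0 < z) :
    Pker n s z v ≤ pns n s * z ^ (2 * s) * ‖v‖ ^ (-((n : ℝ) + 2 * s)) :=
  mul_le_mul_of_nonneg_left (norm_sq_add_sq_rpow_le hs0 hv)
    (mul_nonneg (pns_pos n hs0).le (by positivity))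

lemma integrable_singularKernel_mul_min (hs0 : 0 < s) (hs1 : s < 1) :
    Integrable fun v : En n => ‖v‖ ^ (-((n : ℝ) + 2 * s)) * min (‖v‖ ^ 2) 1 :=
  integrable_norm_rpow_mul_min volume (by rw [finrank_euclideanSpace_fin]; linarith)
    (by rw [finrank_euclideanSpace_fin]; linarith)

lemma abs_conormalPker_le_norm_rpow (hs0 : 0 < s) (hz : 0 < z) {v : En n} (hv : v ≠ 0) :
    |conormalPker n s z v| ≤
      ((n : ℝ) + 2 * s) * pns n s * ‖v‖ ^ (-((n : ℝ) + 2 * s)) := by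
  refine (abs_conormalPker_le hs0 hz v).trans ((mul_le_mul_of_nonneg_left (Pker_le hs0 hv hz)
    (by positivity)).trans_eq ?_)
  have hcancel : z ^ (-(2 * s)) * z ^ (2 * s) = 1 := by
    rw [← Real.rpow_add hz, neg_add_cancel, Real.rpow_zero]
  linear_combination ((n : ℝ) + 2 * s) * pns n s * ‖v‖ ^ (-((n : ℝ) + 2 * s)) * hcancel

lemma integral_abs_mul_min_le (hs0 : 0 < s) (hs1 : s < 1) {k : En n → ℝ} {c : ℝ}
    (hk : ∀ v, v ≠ 0 → |k v| ≤ c * ‖v‖ ^ (-((n : ℝ) + 2 * s))) :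
    ∫ v : En n, |k v| * min (‖v‖ ^ 2) 1 ≤
      c * ∫ v : En n, ‖v‖ ^ (-((n : ℝ) + 2 * s)) * min (‖v‖ ^ 2) 1 := by
  rw [← integral_const_mul]
  refine integral_mono_of_nonneg (.of_forall fun v => by positivity)
    ((integrable_singularKernel_mul_min hs0 hs1).const_mul _) (.of_forall fun v => ?_)
  obtain rfl | hv := eq_or_ne v 0
  · simp
  · simp only [← mul_assoc]
    exact mul_le_mul_of_nonneg_right (hk v hv) (by positivity)

lemma integrable_norm_sq_add_sq_rpow (hs0 : 0 < s) (hz : 0 < z) :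
    Integrable fun v : En n => (‖v‖ ^ 2 + z ^ 2) ^ (-((n : ℝ) + 2 * s) / 2) := by
  simpa only [neg_div] using integrable_norm_sq_add_sq_rpow_neg (E := En n) volume
    (b := ((n : ℝ) + 2 * s) / 2) (by rw [finrank_euclideanSpace_fin]; linarith) hz

lemma integrable_Pker (hs0 : 0 < s) (hz : 0 < z) : Integrable (Pker n s z) :=
  (integrable_norm_sq_add_sq_rpow hs0 hz).const_mul _

lemma integrable_conormalPker (hs0 : 0 < s) (hz : 0 < z) : Integrable (conormalPker n s z) :=
  ((integrable_Pker hs0 hz).const_mul _).mono' (continuous_conormalPker hz).aestronglyMeasurable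
    (.of_forall (abs_conormalPker_le hs0 hz))

lemma integrable_pdPker (hs0 : 0 < s) (hz : 0 < z) (i : Fin n) : Integrable (pdPker n s z i) :=
  ((integrable_Pker hs0 hz).const_mul _).mono' (continuous_pdPker hz i).aestronglyMeasurable
    (.of_forall (abs_pdPker_le hs0 hz i))

lemma integrable_pdpdPker (hs0 : 0 < s) (hz : 0 < z) (i : Fin n) : Integrable (pdpdPker n s z i) :=
  ((integrable_Pker hs0 hz).const_mul _).mono' (continuous_pdpdPker hz i).aestronglyMeasurable
    (.of_forall (abs_pdpdPker_le hs0 hz i))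

lemma integral_Pker (hs0 : 0 < s) (hz : 0 < z) : ∫ v, Pker n s z v = 1 := by
  have hb : (Module.finrank ℝ (En n) : ℝ) / 2 < ((n : ℝ) + 2 * s) / 2 := by
    rw [finrank_euclideanSpace_fin]
    linarith
  have hGamma := (Real.Gamma_pos_of_pos hs0).ne'
  have hscale : (z ^ 2) ^ (-s) = (z ^ (2 * s))⁻¹ := by
    rw [Real.rpow_neg (sq_nonneg z), Real.rpow_mul hz.le, Real.rpow_two]
  simp only [Pker, neg_div]
  rw [integral_const_mul, integral_norm_sq_add_sq_rpow_neg hb hz, finrank_euclideanSpace_fin,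
    show ((n : ℝ) + 2 * s) / 2 = n / 2 + s by ring, add_sub_cancel_left,
    sub_add_cancel_left, hscale, pns]
  have hpow : z ^ (2 * s) ≠ 0 := (Real.rpow_pos_of_pos hz _).ne'
  have hpi : Real.pi ^ ((n : ℝ) / 2) ≠ 0 := (Real.rpow_pos_of_pos Real.pi_pos _).ne'
  field_simp

lemma integral_abs_Pker (hs0 : 0 < s) (hz : 0 < z) : ∫ v, |Pker n s z v| = 1 := by
  simp only [abs_of_pos (Pker_pos hs0 hz _), integral_Pker hs0 hz]

lemma integral_abs_conormalPker_le (hs0 : 0 < s) (hz : 0 < z) :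
    ∫ v, |conormalPker n s z v| ≤ ((n : ℝ) + 2 * s) * z ^ (-(2 * s)) := by
  refine (integral_mono (integrable_conormalPker hs0 hz).abs
    ((integrable_Pker hs0 hz).const_mul _) (abs_conormalPker_le hs0 hz)).trans_eq ?_
  rw [integral_const_mul, integral_Pker hs0 hz, mul_one]

lemma locallyDominated_Pker (hs0 : 0 < s) (hz : 0 < z) : LocallyDominated (Pker n s) z := by
  refine ⟨_, (integrable_norm_sq_add_sq_rpow hs0 (half_pos hz)).const_mul
    (pns n s * (2 * z) ^ (2 * s)), ?_⟩
  have hp := (pns_pos n hs0).le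
  filter_upwards [Ioo_mem_nhds (half_lt_self hz) (lt_mul_of_one_lt_left hz one_lt_two)]
    with t ⟨ht_gt, ht_lt⟩ v
  have ht : 0 < t := (half_pos hz).trans ht_gt
  rw [abs_of_pos (Pker_pos hs0 ht v)]
  exact mul_le_mul (by gcongr) (Real.rpow_le_rpow_of_nonpos (norm_sq_add_sq_pos (half_pos hz) v)
    (by gcongr) (by have := n.cast_nonneg (α := ℝ); linarith))
    (Real.rpow_nonneg (norm_sq_add_sq_pos ht v).le _) (by positivity)

lemma locallyDominated_conormalPker (hs0 : 0 < s) (hz : 0 < z) :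
    LocallyDominated (conormalPker n s) z := by
  refine (locallyDominated_Pker hs0 hz).mono
    (g := fun t => ((n : ℝ) + 2 * s) * t ^ (-(2 * s))) (continuousAt_const.mul
    (Real.continuousAt_rpow_const z (-(2 * s)) (Or.inl hz.ne'))) ?_
  filter_upwards [lt_mem_nhds hz] with t ht v
  rw [abs_of_pos (Pker_pos hs0 ht v)]
  exact abs_conormalPker_le hs0 ht v

lemma locallyDominated_deriv_Pker (hs0 : 0 < s) (hz : 0 < z) :
    LocallyDominated (fun t v => t ^ (2 * s - 1) * conormalPker n s t v) z := by
  refine (locallyDominated_conormalPker hs0 hz).mono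
    (Real.continuousAt_rpow_const z (2 * s - 1) (Or.inl hz.ne')) ?_
  filter_upwards [lt_mem_nhds hz] with t ht v
  rw [abs_mul, abs_of_pos (Real.rpow_pos_of_pos ht _)]

lemma locallyDominated_deriv_conormalPker (hs0 : 0 < s) (hz : 0 < z) :
    LocallyDominated (fun t v => -t ^ (1 - 2 * s) * ∑ i : Fin n, pdpdPker n s t i v) z := by
  refine (locallyDominated_Pker hs0 hz).mono
    (g := fun t => t ^ (1 - 2 * s) *
      ∑ _i : Fin n, ((n : ℝ) + 2 * s) / t ^ 2 * ((n : ℝ) + 2 * s + 2)) ?_ ?_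
  · exact (Real.continuousAt_rpow_const z _ (Or.inl hz.ne')).mul (tendsto_finsetSum _ fun i _ =>
      (continuousAt_const.div (continuousAt_id.pow 2) (pow_pos hz 2).ne').mul continuousAt_const)
  · filter_upwards [lt_mem_nhds hz] with t ht v
    rw [abs_mul, abs_neg, abs_of_pos (Real.rpow_pos_of_pos ht _), abs_of_pos (Pker_pos hs0 ht v),
      mul_assoc, Finset.sum_mul]
    refine mul_le_mul_of_nonneg_left ((Finset.abs_sum_le_sum_abs _ _).trans
      (Finset.sum_le_sum fun i _ => abs_pdpdPker_le hs0 ht i v)) (by positivity)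

lemma hasDominatedDerivAt_Pker (hs0 : 0 < s) (hz : 0 < z) :
    HasDominatedDerivAt (Pker n s) (fun t v => t ^ (2 * s - 1) * conormalPker n s t v) z where
  aestronglyMeasurable :=
    (lt_mem_nhds hz).mono fun _ ht => (continuous_Pker ht).aestronglyMeasurable
  locallyDominated := locallyDominated_Pker hs0 hz
  aestronglyMeasurable_deriv :=
    (continuous_const.mul (continuous_conormalPker hz)).aestronglyMeasurable
  locallyDominated_deriv := locallyDominated_deriv_Pker hs0 hz
  hasDerivAt := (lt_mem_nhds hz).mono fun _ ht => hasDerivAt_Pker ht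

lemma hasDominatedDerivAt_conormalPker (hs0 : 0 < s) (hz : 0 < z) :
    HasDominatedDerivAt (conormalPker n s)
      (fun t v => -t ^ (1 - 2 * s) * ∑ i, pdpdPker n s t i v) z where
  aestronglyMeasurable :=
    (lt_mem_nhds hz).mono fun _ ht => (continuous_conormalPker ht).aestronglyMeasurable
  locallyDominated := locallyDominated_conormalPker hs0 hz
  aestronglyMeasurable_deriv := (continuous_const.mul (continuous_finsetSum _ fun i _ =>
    continuous_pdpdPker hz i)).aestronglyMeasurable
  locallyDominated_deriv := locallyDominated_deriv_conormalPker hs0 hz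
  hasDerivAt := (lt_mem_nhds hz).mono fun _ ht => hasDerivAt_conormalPker ht

lemma integral_conormalPker (hs0 : 0 < s) (hz : 0 < z) : ∫ v, conormalPker n s z v = 0 := by
  have hderiv := (hasDominatedDerivAt_Pker (n := n) hs0 hz).hasDerivAt_integral
  have hconst : HasDerivAt (fun z => ∫ v, Pker n s z v) 0 z :=
    (hasDerivAt_const z 1).congr_of_eventuallyEq
      ((lt_mem_nhds hz).mono fun t ht => integral_Pker hs0 ht)
  rw [integral_const_mul] at hderiv
  exact (mul_eq_zero.1 (hderiv.unique hconst)).resolve_left (Real.rpow_pos_of_pos hz _).ne'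

lemma tendsto_conormalPker {v : En n} (hv : v ≠ 0) :
    Tendsto (fun z => conormalPker n s z v) (𝓝[>] 0)
      (𝓝 (2 * s * pns n s * ‖v‖ ^ (-((n : ℝ) + 2 * s)))) := by
  have hρ : ‖v‖ ^ 2 + (0 : ℝ) ^ 2 ≠ 0 := by simpa using hv
  have hbase : ContinuousAt (fun z : ℝ => ‖v‖ ^ 2 + z ^ 2) 0 := by fun_prop
  have hcont : ContinuousAt (fun z => conormalPker n s z v) 0 :=
    (continuousAt_const.mul (continuousAt_const.sub (ContinuousAt.div (by fun_prop) hbase hρ))).mul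
      (hbase.rpow_const (Or.inl hρ))
  have hvalue : conormalPker n s 0 v = 2 * s * pns n s * ‖v‖ ^ (-((n : ℝ) + 2 * s)) := by
    rw [conormalPker, zero_pow two_ne_zero, mul_zero, zero_div, sub_zero, add_zero,
      norm_sq_rpow_half, mul_comm (pns n s)]
  rw [← hvalue]
  exact hcont.tendsto.mono_left nhdsWithin_le_nhds

lemma Pker_smul (hz : 0 < z) (v : En n) : Pker n s z (z • v) = (z ^ n)⁻¹ * Pker n s 1 v := by
  have hsq : ‖z • v‖ ^ 2 + z ^ 2 = z ^ 2 * (‖v‖ ^ 2 + 1 ^ 2) := by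
    rw [norm_smul, Real.norm_of_nonneg hz.le]
    ring
  have hpow : z ^ (2 * s) * (z ^ 2) ^ (-((n : ℝ) + 2 * s) / 2) = (z ^ n)⁻¹ := by
    rw [← Real.norm_of_nonneg hz.le, norm_sq_rpow_half, Real.norm_of_nonneg hz.le,
      ← Real.rpow_add hz, ← Real.rpow_natCast, ← Real.rpow_neg hz.le]
    congr 1
    ring
  rw [Pker, Pker, hsq, Real.mul_rpow (sq_nonneg z) (by positivity), ← hpow, Real.one_rpow]
  ring

lemma convolution_Pker_eq_integral (hz : 0 < z) (g : En n → ℝ) (x : En n) :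
    (Pker n s z ⋆ g) x = ∫ v, Pker n s 1 v * g (x - z • v) := by
  have hscale := Measure.integral_comp_smul volume (fun v : En n => Pker n s z v * g (x - v)) z
  simp only [Pker_smul hz, mul_assoc, integral_const_mul, finrank_euclideanSpace_fin,
    abs_of_pos (inv_pos.2 (pow_pos hz n)), smul_eq_mul] at hscale
  exact (mul_left_cancel₀ (inv_ne_zero (pow_ne_zero n hz.ne')) hscale).symm

lemma BddContinuous.convolution_Pker_add_const {g : En n → ℝ} (hg : BddContinuous g)
    (hs0 : 0 < s) (hz : 0 < z) (a : ℝ) (x : En n) :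
    (Pker n s z ⋆ fun y => g y + a) x = (Pker n s z ⋆ g) x + a := by
  have hP := integrable_Pker (n := n) hs0 hz
  have hadd := integral_add (hg.integrable_convolution hP x) (hP.mul_const a)
  rw [integral_mul_const, integral_Pker hs0 hz, one_mul] at hadd
  rw [convolution_lsmul, convolution_lsmul, ← hadd]
  exact integral_congr_ae (.of_forall fun v => mul_add _ _ _)

lemma abs_convolution_Pker_le_mul {a : ℝ} {f h : En n → ℝ} (hs0 : 0 < s) (hz : 0 < z)
    (hh : BddContinuous h) (hf : ∀ y, |f y| ≤ a * h y) (x : En n) :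
    |(Pker n s z ⋆ f) x| ≤ a * (Pker n s z ⋆ h) x := by
  have hle := abs_convolution_le_mul_convolution (c := 1) (integrable_Pker hs0 hz) hh
    (fun v => ((abs_of_pos (Pker_pos hs0 hz v)).trans (one_mul _).symm).le) hf x
  rwa [one_mul] at hle

lemma BddContinuous.tendsto_convolution_Pker {g : En n → ℝ} (hg : BddContinuous g) (hs0 : 0 < s)
    (x : En n) : Tendsto (fun z => (Pker n s z ⋆ g) x) (𝓝[>] 0) (𝓝 (g x)) := by
  obtain ⟨C, hC⟩ := hg.bounded
  have hlim : Tendsto (fun z : ℝ => ∫ v, Pker n s 1 v * g (x - z • v)) (𝓝[>] 0)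
      (𝓝 (∫ v, Pker n s 1 v * g x)) := by
    refine tendsto_integral_filter_of_dominated_convergence (fun v => Pker n s 1 v * C)
      (.of_forall fun z => ((continuous_Pker one_pos).mul
        (hg.continuous.comp (by fun_prop))).aestronglyMeasurable)
      (.of_forall fun z => .of_forall fun v => ?_) ((integrable_Pker hs0 one_pos).mul_const C)
      (.of_forall fun v => ?_)
    · rw [norm_mul, Real.norm_of_nonneg (Pker_pos hs0 one_pos v).le]
      exact mul_le_mul_of_nonneg_left (hC _) (Pker_pos hs0 one_pos v).le
    · have hcont : Continuous fun z : ℝ => Pker n s 1 v * g (x - z • v) :=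
        continuous_const.mul (hg.continuous.comp (by fun_prop))
      simpa using (hcont.tendsto 0).mono_left nhdsWithin_le_nhds
  rw [integral_mul_const, integral_Pker hs0 one_pos, one_mul] at hlim
  refine hlim.congr' ?_
  filter_upwards [self_mem_nhdsWithin] with z hz
  exact (convolution_Pker_eq_integral hz g x).symm

end PoissonKernelEstimates

section Extension

variable {n : ℕ} {s z : ℝ} {u : En n → ℝ}

lemma Pconv_eq_convolution (f : En n → ℝ) : Pconv n s z f = Pker n s z ⋆ f := by
  funext x
  exact (convolution_lsmul_swap (f := Pker n s z) (g := f) (x := x) (μ := volume)).symm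

lemma CSext_eq_convolution : (fun x => CSext n s u x z) = Pker n s z ⋆ u :=
  Pconv_eq_convolution u

/-- The conormal derivative `z^{1-2s} ∂_z U` of the extension `U` of `u`, written as a convolution
so that it has a meaning without any regularity of `U`. -/
def CSconormal (n : ℕ) (s : ℝ) (u : En n → ℝ) (x : En n) (z : ℝ) : ℝ :=
  (conormalPker n s z ⋆ u) x

/-- The squared full gradient `|∇̃U|² = |∇_x U|² + |∂_z U|²` of the extension `U` of `u`. -/
def CSgradSq (n : ℕ) (s : ℝ) (u : En n → ℝ) (x : En n) (z : ℝ) : ℝ :=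
  (∑ i, (pd i (fun y => CSext n s u y z) x) ^ 2) + (deriv (CSext n s u x) z) ^ 2

lemma bddContinuous_CSext (hu : BddContinuous u) (hs0 : 0 < s) (hz : 0 < z) :
    BddContinuous fun x => CSext n s u x z := by
  rw [CSext_eq_convolution]
  exact hu.convolution (integrable_Pker hs0 hz)

lemma bddContinuous_CSconormal (hu : BddContinuous u) (hs0 : 0 < s) (hz : 0 < z) :
    BddContinuous fun x => CSconormal n s u x z :=
  hu.convolution (integrable_conormalPker hs0 hz)

lemma abs_CSext_le {C : ℝ} (hC : ∀ x, |u x| ≤ C) (hs0 : 0 < s) (hz : 0 < z) (x : En n) :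
    |CSext n s u x z| ≤ C := by
  have hle := norm_convolution_le (f := u) (integrable_Pker hs0 hz) hC x
  rwa [integral_abs_Pker hs0 hz, mul_one, ← Pconv_eq_convolution] at hle

lemma abs_CSconormal_le {C : ℝ} (hC : ∀ x, |u x| ≤ C) (hs0 : 0 < s) (hz : 0 < z) (x : En n) :
    |CSconormal n s u x z| ≤ C * (((n : ℝ) + 2 * s) * z ^ (-(2 * s))) :=
  (norm_convolution_le (f := u) (integrable_conormalPker hs0 hz) hC x).trans
    (mul_le_mul_of_nonneg_left (integral_abs_conormalPker_le hs0 hz)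
      ((abs_nonneg _).trans (hC 0)))

lemma hasLineDerivAt_CSext (hu : BddContDiffOne u) (hs0 : 0 < s) (hz : 0 < z) (i : Fin n)
    (x : En n) :
    HasLineDerivAt ℝ (fun y => CSext n s u y z) (CSext n s (pd i u) x z) x
      (EuclideanSpace.single i 1) := by
  have hline := hu.hasLineDerivAt_convolution (integrable_Pker hs0 hz) i x
  rwa [← CSext_eq_convolution, ← Pconv_eq_convolution] at hline

lemma pd_CSext (hu : BddContDiffOne u) (hs0 : 0 < s) (hz : 0 < z) (i : Fin n) (x : En n) :
    pd i (fun y => CSext n s u y z) x = CSext n s (pd i u) x z := by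
  rw [CSext_eq_convolution, hu.pd_convolution (integrable_Pker hs0 hz), ← Pconv_eq_convolution]
  rfl

lemma hasBoundedDerivAt_CSext (hu : BddContinuous u) (hs0 : 0 < s) (hz : 0 < z) :
    HasBoundedDerivAt (fun t y => CSext n s u y t)
      (fun t y => t ^ (2 * s - 1) * CSconormal n s u y t) z := by
  have hU : (fun t y => CSext n s u y t) = fun t => Pker n s t ⋆ u :=
    funext fun _ => CSext_eq_convolution
  have hU' : (fun t y => t ^ (2 * s - 1) * CSconormal n s u y t) =
      fun t => (fun v => t ^ (2 * s - 1) * conormalPker n s t v) ⋆ u := by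
    funext t y
    simp only [CSconormal, convolution_lsmul, smul_eq_mul, mul_assoc, integral_const_mul]
  rw [hU, hU']
  exact HasDominatedDerivAt.hasBoundedDerivAt_convolution
    ((lt_mem_nhds hz).mono fun _ ht => hasDominatedDerivAt_Pker hs0 ht) hu

lemma hasBoundedDerivAt_CSconormal (hu : BddContinuous u) (hs0 : 0 < s) (hz : 0 < z) :
    HasBoundedDerivAt (fun t y => CSconormal n s u y t)
      (fun t => (fun v => -t ^ (1 - 2 * s) * ∑ i, pdpdPker n s t i v) ⋆ u) z :=
  HasDominatedDerivAt.hasBoundedDerivAt_convolution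
    ((lt_mem_nhds hz).mono fun _ ht => hasDominatedDerivAt_conormalPker hs0 ht) hu

lemma convolution_deriv_conormalPker {w : En n → ℝ} {w' w'' : Fin n → En n → ℝ} (hs0 : 0 < s)
    (hz : 0 < z) (hw : BddContinuous w) (hw' : ∀ i, BddContinuous (w' i))
    (hw'' : ∀ i, BddContinuous (w'' i))
    (hww' : ∀ i v, HasLineDerivAt ℝ w (w' i v) v (EuclideanSpace.single i 1))
    (hww'' : ∀ i v, HasLineDerivAt ℝ (w' i) (w'' i v) v (EuclideanSpace.single i 1)) (x : En n) :
    ((fun v => -z ^ (1 - 2 * s) * ∑ i, pdpdPker n s z i v) ⋆ w) x =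
      -z ^ (1 - 2 * s) * Pconv n s z (fun y => ∑ i, w'' i y) x := by
  have hgreen : ∀ i, Pker n s z ⋆ w'' i = pdpdPker n s z i ⋆ w := fun i =>
    convolution_hasLineDerivAt_hasLineDerivAt_eq (integrable_Pker hs0 hz)
      (integrable_pdPker hs0 hz i) (integrable_pdpdPker hs0 hz i) hw (hw' i) (hw'' i)
      (fun v => hasLineDerivAt_Pker hz v i) (fun v => hasLineDerivAt_pdPker hz v i) (hww' i)
      (hww'' i)
  rw [Pconv_eq_convolution, BddContinuous.convolution_finsetSum hw'' (integrable_Pker hs0 hz)]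
  simp only [hgreen]
  simp only [convolution_lsmul, smul_eq_mul, mul_assoc, Finset.sum_mul, integral_const_mul]
  exact congrArg _ (integral_finsetSum _ fun i _ =>
    hw.integrable_convolution (integrable_pdpdPker hs0 hz i) x)

lemma CSext_lapX (hu : BddContDiffTwo u) (hs0 : 0 < s) (hz : 0 < z) (x : En n) :
    CSext n s (lapX u) x z = ∑ i, CSext n s (pd i (pd i u)) x z := by
  simp only [CSext, Pconv_eq_convolution]
  exact BddContinuous.convolution_finsetSum
    (fun i => (hu.bddContDiffOne_pd i).bddContinuous_pd i) (integrable_Pker hs0 hz) x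

lemma convolution_deriv_conormalPker_eq_CSext_lapX (hu : BddContDiffTwo u) (hs0 : 0 < s)
    (hz : 0 < z) (x : En n) :
    ((fun v => -z ^ (1 - 2 * s) * ∑ i, pdpdPker n s z i v) ⋆ u) x =
      -z ^ (1 - 2 * s) * CSext n s (lapX u) x z :=
  convolution_deriv_conormalPker hs0 hz hu.toBddContDiffOne.bddContinuous
    hu.toBddContDiffOne.bddContinuous_pd (fun i => (hu.bddContDiffOne_pd i).bddContinuous_pd i)
    hu.toBddContDiffOne.hasLineDerivAt_pd
    (fun i => (hu.bddContDiffOne_pd i).hasLineDerivAt_pd i) x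

lemma exists_abs_CSext_sub_le (hu : BddContDiffTwo u) (hs0 : 0 < s) (hs1 : s < 1) :
    ∃ C, 0 ≤ C ∧ ∀ z, 0 < z → ∀ x, |CSext n s u x z - u x| ≤ C * z ^ (2 * s) := by
  obtain ⟨M, hM0, hM⟩ := hu.exists_norm_convolution_sub_le
  refine ⟨M * (pns n s * ∫ v : En n, ‖v‖ ^ (-((n : ℝ) + 2 * s)) * min (‖v‖ ^ 2) 1),
    mul_nonneg hM0 (mul_nonneg (pns_pos n hs0).le (integral_nonneg fun v => by positivity)),
    fun z hz x => ?_⟩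
  have hle := hM _ (integrable_Pker hs0 hz) Pker_neg x
  rw [integral_Pker hs0 hz, one_smul, ← Pconv_eq_convolution] at hle
  have hker : ∀ v : En n, v ≠ 0 →
      |Pker n s z v| ≤ pns n s * z ^ (2 * s) * ‖v‖ ^ (-((n : ℝ) + 2 * s)) := fun v hv =>
    (abs_of_pos (Pker_pos hs0 hz v)).trans_le (Pker_le hs0 hv hz)
  exact (hle.trans (mul_le_mul_of_nonneg_left (integral_abs_mul_min_le hs0 hs1 hker)
    hM0)).trans_eq (by ring)

lemma exists_abs_CSconormal_le (hu : BddContDiffTwo u) (hs0 : 0 < s) (hs1 : s < 1) :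
    ∃ C, ∀ z, 0 < z → ∀ x, |CSconormal n s u x z| ≤ C := by
  obtain ⟨M, hM0, hM⟩ := hu.exists_norm_convolution_sub_le
  refine ⟨M * (((n : ℝ) + 2 * s) * pns n s *
    ∫ v : En n, ‖v‖ ^ (-((n : ℝ) + 2 * s)) * min (‖v‖ ^ 2) 1), fun z hz x => ?_⟩
  have hle := hM _ (integrable_conormalPker hs0 hz) conormalPker_neg x
  rw [integral_conormalPker hs0 hz, zero_smul, sub_zero] at hle
  exact hle.trans (mul_le_mul_of_nonneg_left
    (integral_abs_mul_min_le hs0 hs1 fun v hv => abs_conormalPker_le_norm_rpow hs0 hz hv) hM0)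

lemma CSgradSq_eq (hu : BddContDiffOne u) (hs0 : 0 < s) (hz : 0 < z) (x : En n) :
    CSgradSq n s u x z =
      (∑ i, CSext n s (pd i u) x z ^ 2) + (z ^ (2 * s - 1) * CSconormal n s u x z) ^ 2 := by
  simp only [CSgradSq, pd_CSext hu hs0 hz,
    ((hasBoundedDerivAt_CSext hu.bddContinuous hs0 hz).hasDerivAt.self_of_nhds x).deriv]

lemma bddContinuous_CSgradSq (hu : BddContDiffOne u) (hs0 : 0 < s) (hz : 0 < z) :
    BddContinuous fun x => CSgradSq n s u x z := by
  simp only [CSgradSq_eq hu hs0 hz]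
  exact (BddContinuous.sum fun i _ =>
    (bddContinuous_CSext (hu.bddContinuous_pd i) hs0 hz).pow 2).add
    (((BddContinuous.const _).mul (bddContinuous_CSconormal hu.bddContinuous hs0 hz)).pow 2)

end Extension

section ScalarFunctions

variable {ψ φ : ℝ → ℝ}

lemma contDiff_one_deriv_of_contDiff_two (hψ : ContDiff ℝ 2 ψ) : ContDiff ℝ 1 (deriv ψ) :=
  hψ.iterate_deriv' 1 1

lemma hasDerivAt_of_contDiff_two (hψ : ContDiff ℝ 2 ψ) (r : ℝ) : HasDerivAt ψ (deriv ψ r) r :=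
  (hψ.differentiable two_ne_zero r).hasDerivAt

lemma hasDerivAt_deriv_of_contDiff_two (hψ : ContDiff ℝ 2 ψ) (r : ℝ) :
    HasDerivAt (deriv ψ) (deriv (deriv ψ) r) r :=
  ((contDiff_one_deriv_of_contDiff_two hψ).differentiable one_ne_zero r).hasDerivAt

lemma continuous_deriv_deriv_of_contDiff_two (hψ : ContDiff ℝ 2 ψ) :
    Continuous (deriv (deriv ψ)) :=
  (contDiff_one_deriv_of_contDiff_two hψ).continuous_deriv le_rfl

lemma exists_abs_deriv_sub_le (hψ : ContDiff ℝ 2 ψ) (M : ℝ) :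
    ∃ K, 0 ≤ K ∧ ∀ a b, |a| ≤ M → |b| ≤ M → |deriv ψ a - deriv ψ b| ≤ K * |a - b| := by
  obtain ⟨K, hK⟩ := exists_abs_le_of_continuous (continuous_deriv_deriv_of_contDiff_two hψ) M
  refine ⟨max K 0, le_max_right _ _, fun a b ha hb => ?_⟩
  exact (convex_Icc (-M) M).norm_image_sub_le_of_norm_hasDerivWithin_le
    (fun r _ => (hasDerivAt_deriv_of_contDiff_two hψ r).hasDerivWithinAt)
    (fun r hr => (hK r (abs_le.2 hr)).trans (le_max_left _ _)) (abs_le.1 hb) (abs_le.1 ha)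

lemma abs_sub_le_of_abs_deriv_le {K M a b c : ℝ} (hψ : Differentiable ℝ ψ) (hK0 : 0 ≤ K)
    (hK : ∀ r, |r| ≤ M → |deriv ψ r| ≤ K * |r - c|) (ha : |a| ≤ M) (hb : |b| ≤ M) :
    |ψ a - ψ b| ≤ K * (|b - c| + |a - b|) * |a - b| := by
  refine (convex_uIcc b a).norm_image_sub_le_of_norm_hasDerivWithin_le (f' := deriv ψ)
    (fun r _ => (hψ r).hasDerivAt.hasDerivWithinAt) (fun r hr => ?_) left_mem_uIcc right_mem_uIcc
  have hrM : |r| ≤ M :=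
    abs_le.2 (uIcc_subset_Icc (abs_le.1 hb) (abs_le.1 ha) hr)
  refine (hK r hrM).trans (mul_le_mul_of_nonneg_left ?_ hK0)
  linarith [abs_sub_left_of_mem_uIcc hr, abs_sub_le r b c]

/-- The Bregman remainder of `φ` at `c`: the error of the first-order Taylor expansion. -/
def bregman (φ : ℝ → ℝ) (c r : ℝ) : ℝ := φ r - φ c - deriv φ c * (r - c)

lemma bregman_self (φ : ℝ → ℝ) (c : ℝ) : bregman φ c c = 0 := by simp [bregman]

lemma contDiff_bregman (hφ : ContDiff ℝ 2 φ) (c : ℝ) : ContDiff ℝ 2 (bregman φ c) :=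
  (hφ.sub contDiff_const).sub (contDiff_const.mul (contDiff_id.sub contDiff_const))

lemma deriv_bregman (hφ : Differentiable ℝ φ) (c : ℝ) :
    deriv (bregman φ c) = fun r => deriv φ r - deriv φ c := by
  funext r
  have hbregman : HasDerivAt (bregman φ c) (deriv φ r - deriv φ c * 1) r :=
    ((hφ r).hasDerivAt.sub_const (φ c)).sub
      (((hasDerivAt_id r).sub_const c).const_mul (deriv φ c))
  rw [hbregman.deriv, mul_one]

lemma deriv_deriv_bregman (hφ : Differentiable ℝ φ) (c : ℝ) :
    deriv (deriv (bregman φ c)) = deriv (deriv φ) := by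
  simp only [deriv_bregman hφ, deriv_sub_const_fun]

end ScalarFunctions

section Flux

variable {n : ℕ} {s z : ℝ} {u : En n → ℝ} {ψ : ℝ → ℝ}

/-- The flux through height `z` in Green's identity on the half-space for the operator
`div (z^{1-2s} ∇̃ ·)`, applied to the Poisson kernel centred at `x` and to `ψ(U)`, where `U` is the
extension of `u`: the integral over `y` of
`P_z(x - y) z^{1-2s} ∂_z ψ(U(y,z)) - z^{1-2s} ∂_z P_z(x - y) ψ(U(y,z))`. -/
def greenFlux (n : ℕ) (s : ℝ) (ψ : ℝ → ℝ) (u : En n → ℝ) (x : En n) (z : ℝ) : ℝ :=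
  (Pker n s z ⋆ fun y => deriv ψ (CSext n s u y z) * CSconormal n s u y z) x -
    (conormalPker n s z ⋆ fun y => ψ (CSext n s u y z)) x

lemma sum_second_deriv_comp_CSext (hu : BddContDiffTwo u) (hs0 : 0 < s) (hz : 0 < z) (x : En n) :
    ∑ i, (deriv (deriv ψ) (CSext n s u x z) * CSext n s (pd i u) x z * CSext n s (pd i u) x z +
        deriv ψ (CSext n s u x z) * CSext n s (pd i (pd i u)) x z) =
      deriv (deriv ψ) (CSext n s u x z) *
          (CSgradSq n s u x z - (z ^ (2 * s - 1) * CSconormal n s u x z) ^ 2) +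
        deriv ψ (CSext n s u x z) * CSext n s (lapX u) x z := by
  rw [CSgradSq_eq hu.toBddContDiffOne hs0 hz, add_sub_cancel_right, CSext_lapX hu hs0 hz,
    Finset.sum_add_distrib, Finset.mul_sum, Finset.mul_sum]
  simp only [pow_two, mul_assoc]

lemma convolution_deriv_conormalPker_comp_CSext (hψ : ContDiff ℝ 2 ψ) (hu : BddContDiffTwo u)
    (hs0 : 0 < s) (hz : 0 < z) (x : En n) :
    ((fun v => -z ^ (1 - 2 * s) * ∑ i, pdpdPker n s z i v) ⋆ fun y => ψ (CSext n s u y z)) x =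
      -z ^ (1 - 2 * s) * Pconv n s z (fun y => deriv (deriv ψ) (CSext n s u y z) *
          (CSgradSq n s u y z - (z ^ (2 * s - 1) * CSconormal n s u y z) ^ 2) +
        deriv ψ (CSext n s u y z) * CSext n s (lapX u) y z) x := by
  have hu1 := hu.toBddContDiffOne
  have hU := bddContinuous_CSext (n := n) hu1.bddContinuous hs0 hz
  have hUi := fun i => bddContinuous_CSext (n := n) (hu1.bddContinuous_pd i) hs0 hz
  have hUii := fun i =>
    bddContinuous_CSext (n := n) ((hu.bddContDiffOne_pd i).bddContinuous_pd i) hs0 hz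
  have hψ1 := hU.continuous_comp (contDiff_one_deriv_of_contDiff_two hψ).continuous
  have hψ2 := hU.continuous_comp (continuous_deriv_deriv_of_contDiff_two hψ)
  simp only [← sum_second_deriv_comp_CSext hu hs0 hz]
  exact convolution_deriv_conormalPker hs0 hz (hU.continuous_comp hψ.continuous)
    (fun i => hψ1.mul (hUi i)) (fun i => ((hψ2.mul (hUi i)).mul (hUi i)).add (hψ1.mul (hUii i)))
    (fun i v => hasLineDerivAt_real_comp (hasDerivAt_of_contDiff_two hψ _)
      (hasLineDerivAt_CSext hu1 hs0 hz i v))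
    (fun i v => hasLineDerivAt_mul (hasLineDerivAt_real_comp (hasDerivAt_deriv_of_contDiff_two hψ _)
      (hasLineDerivAt_CSext hu1 hs0 hz i v))
      (hasLineDerivAt_CSext (hu.bddContDiffOne_pd i) hs0 hz i v)) x

lemma hasDerivAt_greenFlux (hψ : ContDiff ℝ 2 ψ) (hu : BddContDiffTwo u) (hs0 : 0 < s)
    (hz : 0 < z) (x : En n) :
    HasDerivAt (greenFlux n s ψ u x)
      (z ^ (1 - 2 * s) * Pconv n s z
        (fun y => deriv (deriv ψ) (CSext n s u y z) * CSgradSq n s u y z) x) z := by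
  have hu0 := hu.toBddContDiffOne.bddContinuous
  have hU := hasBoundedDerivAt_CSext (n := n) hu0 hs0 hz
  have hA := (hU.comp (contDiff_one_deriv_of_contDiff_two hψ)).mul
    (hasBoundedDerivAt_CSconormal hu0 hs0 hz)
  have hB := hU.comp (hψ.of_le one_le_two)
  have hP := hasDominatedDerivAt_Pker (n := n) hs0 hz
  refine ((hP.hasDerivAt_convolution hA x).sub
    ((hasDominatedDerivAt_conormalPker hs0 hz).hasDerivAt_convolution hB x)).congr_deriv ?_
  have hpow : z ^ (1 - 2 * s) * z ^ (2 * s - 1) = 1 := by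
    rw [← Real.rpow_add hz, sub_add_sub_cancel', sub_self, Real.rpow_zero]
  have hcancel : ((fun v => z ^ (2 * s - 1) * conormalPker n s z v) ⋆ fun y =>
      deriv ψ (CSext n s u y z) * CSconormal n s u y z) x =
      (conormalPker n s z ⋆ fun y =>
        deriv ψ (CSext n s u y z) * (z ^ (2 * s - 1) * CSconormal n s u y z)) x := by
    simp only [convolution_lsmul, smul_eq_mul, mul_assoc, mul_left_comm]
  have hG := (hU.bddContinuous.continuous_comp (continuous_deriv_deriv_of_contDiff_two hψ)).mul
    (bddContinuous_CSgradSq hu.toBddContDiffOne hs0 hz)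
  have hlap : ∀ y, deriv (deriv ψ) (CSext n s u y z) *
        (CSgradSq n s u y z - (z ^ (2 * s - 1) * CSconormal n s u y z) ^ 2) +
        deriv ψ (CSext n s u y z) * CSext n s (lapX u) y z =
      deriv (deriv ψ) (CSext n s u y z) * CSgradSq n s u y z - z ^ (2 * s - 1) *
        (deriv (deriv ψ) (CSext n s u y z) * (z ^ (2 * s - 1) * CSconormal n s u y z) *
          CSconormal n s u y z + deriv ψ (CSext n s u y z) *
            ((fun v => -z ^ (1 - 2 * s) * ∑ i, pdpdPker n s z i v) ⋆ u) y) := fun y => by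
    rw [convolution_deriv_conormalPker_eq_CSext_lapX hu hs0 hz]
    linear_combination -deriv ψ (CSext n s u y z) * CSext n s (lapX u) y z * hpow
  rw [convolution_deriv_conormalPker_comp_CSext hψ hu hs0 hz, hcancel]
  simp only [hlap, Pconv_eq_convolution]
  rw [BddContinuous.convolution_sub_const_mul hG hA.bddContinuous_deriv hP.integrable]
  rw [neg_mul, mul_sub, ← mul_assoc (z ^ (1 - 2 * s)) (z ^ (2 * s - 1)), hpow, one_mul]
  ring

end Flux

section FluxLimits

variable {n : ℕ} {s z : ℝ} {u g : En n → ℝ} {ψ : ℝ → ℝ} {x : En n}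

lemma tendsto_greenFlux_atTop (hψ : ContDiff ℝ 1 ψ) (hu : BddContinuous u) (hs0 : 0 < s)
    (x : En n) : Tendsto (greenFlux n s ψ u x) atTop (𝓝 0) := by
  obtain ⟨C, hC⟩ := hu.bounded
  obtain ⟨K, hK⟩ := exists_abs_le_of_continuous hψ.continuous C
  obtain ⟨K', hK'⟩ := exists_abs_le_of_continuous (hψ.continuous_deriv le_rfl) C
  have hbound : ∀ z, 0 < z → ‖greenFlux n s ψ u x z‖ ≤
      (K' * C + K) * ((n : ℝ) + 2 * s) * z ^ (-(2 * s)) := fun z hz => by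
    have hconormal : ∀ y, ‖deriv ψ (CSext n s u y z) * CSconormal n s u y z‖ ≤
        K' * (C * (((n : ℝ) + 2 * s) * z ^ (-(2 * s)))) := fun y => by
      rw [norm_mul]
      exact mul_le_mul (hK' _ (abs_CSext_le hC hs0 hz y)) (abs_CSconormal_le hC hs0 hz y)
        (norm_nonneg _) ((abs_nonneg _).trans (hK' _ (abs_CSext_le hC hs0 hz y)))
    have hvalue : ∀ y, ‖ψ (CSext n s u y z)‖ ≤ K := fun y => hK _ (abs_CSext_le hC hs0 hz y)
    have hK0 : 0 ≤ K := (norm_nonneg _).trans (hvalue 0)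
    have hP := norm_convolution_le (integrable_Pker hs0 hz) hconormal x
    have hQ := (norm_convolution_le (integrable_conormalPker hs0 hz) hvalue x).trans
      (mul_le_mul_of_nonneg_left (integral_abs_conormalPker_le hs0 hz) hK0)
    rw [integral_abs_Pker hs0 hz, mul_one] at hP
    exact ((norm_sub_le _ _).trans (add_le_add hP hQ)).trans_eq (by ring)
  refine squeeze_zero_norm' ((eventually_gt_atTop 0).mono hbound) ?_
  rw [← mul_zero ((K' * C + K) * ((n : ℝ) + 2 * s))]
  exact (tendsto_rpow_neg_atTop (by positivity)).const_mul _

lemma tendsto_convolution_conormalPker {M : ℝ} (hg : Continuous g)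
    (hM : ∀ y, |g y| ≤ M * min (‖x - y‖ ^ 2) 1) (hs0 : 0 < s) (hs1 : s < 1) :
    Tendsto (fun z => (conormalPker n s z ⋆ g) x) (𝓝[>] 0)
      (𝓝 (2 * s * pns n s * ∫ y, ‖x - y‖ ^ (-((n : ℝ) + 2 * s)) * g y)) := by
  have hgx : g x = 0 := by simpa using hM x
  have hint : Integrable fun y => ‖x - y‖ ^ (-((n : ℝ) + 2 * s)) * g y :=
    integrable_norm_sub_rpow_mul volume (by simpa using hs0) (by simp; linarith)
      hg.aestronglyMeasurable hM
  rw [← integral_const_mul]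
  simp only [convolution_lsmul_swap, smul_eq_mul]
  refine tendsto_integral_filter_of_dominated_convergence
    (fun y => ((n : ℝ) + 2 * s) * pns n s * ‖‖x - y‖ ^ (-((n : ℝ) + 2 * s)) * g y‖)
    ?_ ?_ (hint.norm.const_mul _) (.of_forall fun y => ?_)
  · filter_upwards [self_mem_nhdsWithin] with z hz
    exact (((continuous_conormalPker hz).comp (by fun_prop)).mul hg).aestronglyMeasurable
  · filter_upwards [self_mem_nhdsWithin] with z hz
    refine .of_forall fun y => ?_
    rcases eq_or_ne y x with rfl | hyx
    · simp [hgx]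
    · rw [norm_mul, norm_mul, ← mul_assoc, Real.norm_of_nonneg (Real.rpow_nonneg (norm_nonneg _) _)]
      exact mul_le_mul_of_nonneg_right
        (abs_conormalPker_le_norm_rpow hs0 hz (sub_ne_zero.2 hyx.symm)) (norm_nonneg _)
  · rcases eq_or_ne y x with rfl | hyx
    · simp [hgx]
    · simpa only [mul_assoc] using (tendsto_conormalPker (sub_ne_zero.2 hyx.symm)).mul_const (g y)

lemma abs_greenFlux_add_convolution_le {K M C c : ℝ} (hψ : ContDiff ℝ 1 ψ) (hu : BddContinuous u)
    (hs0 : 0 < s) (hz : 0 < z) (hK0 : 0 ≤ K) (hM : ∀ y, |u y| ≤ M)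
    (hK : ∀ r, |r| ≤ M → |deriv ψ r| ≤ K * |r - c|)
    (hU : ∀ y, |CSext n s u y z - u y| ≤ C * z ^ (2 * s))
    (hV : ∀ y, |CSconormal n s u y z| ≤ C) (x : En n) :
    |greenFlux n s ψ u x z + (conormalPker n s z ⋆ fun y => ψ (u y)) x| ≤
      K * C * (1 + ((n : ℝ) + 2 * s)) *
        (Pker n s z ⋆ fun y => |u y - c| + C * z ^ (2 * s)) x := by
  have hC0 : 0 ≤ C := (abs_nonneg _).trans (hV x)
  have hUM := fun y => abs_CSext_le hM hs0 hz y
  have hQ := integrable_conormalPker (n := n) hs0 hz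
  have hψu := hu.continuous_comp hψ.continuous
  have hψU := (bddContinuous_CSext (n := n) hu hs0 hz).continuous_comp hψ.continuous
  have hh : BddContinuous fun y => |u y - c| + C * z ^ (2 * s) :=
    hu.continuous_comp (φ := fun r => |r - c| + C * z ^ (2 * s)) (by fun_prop)
  have hconormal : ∀ y, |deriv ψ (CSext n s u y z) * CSconormal n s u y z| ≤
      K * C * (|u y - c| + C * z ^ (2 * s)) := fun y => by
    rw [abs_mul, mul_right_comm]
    refine mul_le_mul ((hK _ (hUM y)).trans (mul_le_mul_of_nonneg_left ?_ hK0)) (hV y)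
      (abs_nonneg _) (by positivity)
    linarith [abs_sub_le (CSext n s u y z) (u y) c, hU y]
  have hvalue : ∀ y, |ψ (CSext n s u y z) - ψ (u y)| ≤
      K * C * z ^ (2 * s) * (|u y - c| + C * z ^ (2 * s)) := fun y => by
    refine (abs_sub_le_of_abs_deriv_le (hψ.differentiable one_ne_zero) hK0 hK (hUM y)
      (hM y)).trans ?_
    rw [mul_assoc K C, mul_right_comm]
    gcongr <;> exact hU y
  have hdecomp : greenFlux n s ψ u x z + (conormalPker n s z ⋆ fun y => ψ (u y)) x =
      (Pker n s z ⋆ fun y => deriv ψ (CSext n s u y z) * CSconormal n s u y z) x -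
        (conormalPker n s z ⋆ fun y => ψ (CSext n s u y z) - ψ (u y)) x := by
    rw [hψU.convolution_sub hψu hQ, greenFlux, sub_sub_eq_add_sub, sub_add_eq_add_sub]
  rw [hdecomp]
  refine ((abs_sub _ _).trans (add_le_add
    (abs_convolution_Pker_le_mul hs0 hz hh hconormal x)
    (abs_convolution_le_mul_convolution (integrable_Pker hs0 hz) hh
      (abs_conormalPker_le hs0 hz) hvalue x))).trans_eq ?_
  have hpow : z ^ (-(2 * s)) * z ^ (2 * s) = 1 := by
    rw [← Real.rpow_add hz, neg_add_cancel, Real.rpow_zero]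
  linear_combination ((n : ℝ) + 2 * s) * K * C *
    (Pker n s z ⋆ fun y => |u y - c| + C * z ^ (2 * s)) x * hpow

lemma exists_abs_comp_le_mul_min (hψ : ContDiff ℝ 2 ψ) (hu : BddContDiffOne u)
    (hψ0 : ψ (u x) = 0) (hψ1 : deriv ψ (u x) = 0) :
    ∃ M, ∀ y, |ψ (u y)| ≤ M * min (‖x - y‖ ^ 2) 1 := by
  obtain ⟨C, hC⟩ := hu.bddContinuous.bounded
  obtain ⟨K, hK0, hK⟩ := exists_abs_deriv_sub_le hψ C
  obtain ⟨M, hM⟩ := hu.exists_norm_sub_sq_le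
  refine ⟨K * M, fun y => ?_⟩
  have hle := abs_sub_le_of_abs_deriv_le (hψ.differentiable two_ne_zero) hK0
    (fun r hr => by simpa only [hψ1, sub_zero] using hK r (u x) hr (hC x)) (hC y) (hC x)
  rw [hψ0, sub_zero, sub_self, abs_zero, zero_add, mul_assoc, ← pow_two] at hle
  exact hle.trans ((mul_le_mul_of_nonneg_left (hM x y) hK0).trans_eq (mul_assoc _ _ _).symm)

lemma tendsto_convolution_Pker_abs_sub_add_rpow (hu : BddContinuous u) (hs0 : 0 < s) (C : ℝ)
    (x : En n) : Tendsto (fun z => (Pker n s z ⋆ fun y => |u y - u x| + C * z ^ (2 * s)) x)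
      (𝓝[>] 0) (𝓝 0) := by
  have hosc : BddContinuous fun y => |u y - u x| :=
    hu.continuous_comp (φ := fun r => |r - u x|) (by fun_prop)
  have hpow : Tendsto (fun z : ℝ => z ^ (2 * s)) (𝓝[>] 0) (𝓝 0) := by
    have hcont := (Real.continuous_rpow_const (q := 2 * s) (by positivity)).tendsto 0
    rw [Real.zero_rpow (by positivity)] at hcont
    exact hcont.mono_left nhdsWithin_le_nhds
  have hlim := (hosc.tendsto_convolution_Pker (n := n) hs0 x).add (hpow.const_mul C)
  simp only [sub_self, abs_zero, mul_zero, add_zero] at hlim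
  refine hlim.congr' ?_
  filter_upwards [self_mem_nhdsWithin] with z hz
  exact (hosc.convolution_Pker_add_const hs0 hz _ x).symm

lemma tendsto_greenFlux_nhdsGT_zero (hψ : ContDiff ℝ 2 ψ) (hu : BddContDiffTwo u) (hs0 : 0 < s)
    (hs1 : s < 1) (hψ0 : ψ (u x) = 0) (hψ1 : deriv ψ (u x) = 0) :
    Tendsto (greenFlux n s ψ u x) (𝓝[>] 0)
      (𝓝 (-(2 * s * pns n s * ∫ y, ‖x - y‖ ^ (-((n : ℝ) + 2 * s)) * ψ (u y)))) := by
  have hu0 := hu.toBddContDiffOne.bddContinuous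
  obtain ⟨B, hB⟩ := hu0.bounded
  obtain ⟨K, hK0, hK⟩ := exists_abs_deriv_sub_le hψ B
  obtain ⟨C₀, -, hC₀⟩ := exists_abs_CSext_sub_le hu hs0 hs1
  obtain ⟨C₁, hC₁⟩ := exists_abs_CSconormal_le hu hs0 hs1
  obtain ⟨M, hM⟩ := exists_abs_comp_le_mul_min hψ hu.toBddContDiffOne hψ0 hψ1
  have herror : Tendsto (fun z => greenFlux n s ψ u x z +
      (conormalPker n s z ⋆ fun y => ψ (u y)) x) (𝓝[>] 0) (𝓝 0) := by
    have hosc := (tendsto_convolution_Pker_abs_sub_add_rpow hu0 hs0 (max C₀ C₁) x).const_mul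
      (K * max C₀ C₁ * (1 + ((n : ℝ) + 2 * s)))
    rw [mul_zero] at hosc
    refine squeeze_zero_norm' ?_ hosc
    filter_upwards [self_mem_nhdsWithin] with z (hz : 0 < z)
    exact abs_greenFlux_add_convolution_le (hψ.of_le one_le_two) hu0 hs0 hz hK0 hB
      (fun r hr => by simpa only [hψ1, sub_zero] using hK r (u x) hr (hB x))
      (fun y => (hC₀ z hz y).trans (by gcongr; exact le_max_left _ _))
      (fun y => (hC₁ z hz y).trans (le_max_right _ _)) x
  have hmain := tendsto_convolution_conormalPker (n := n) (g := fun y => ψ (u y))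
    (hψ.continuous.comp hu0.continuous) hM hs0 hs1
  simpa only [add_sub_cancel_right, zero_sub] using herror.sub hmain

end FluxLimits

section Energy

lemma hasDerivAt_update_of_ne {f : ℝ → ℝ} {f' a z : ℝ} (hf : HasDerivAt f f' z) (hz : z ≠ a)
    (l : ℝ) : HasDerivAt (Function.update f a l) f' z :=
  hf.congr_of_eventuallyEq ((eventually_ne_nhds hz).mono fun _ h => Function.update_of_ne h l f)

lemma tendsto_update_atTop {f : ℝ → ℝ} {m : ℝ} (hf : Tendsto f atTop (𝓝 m)) (a l : ℝ) :
    Tendsto (Function.update f a l) atTop (𝓝 m) :=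
  hf.congr' ((eventually_ne_atTop a).mono fun _ h => (Function.update_of_ne h l f).symm)

lemma integrableOn_Ioi_of_hasDerivAt_of_nonneg_of_tendsto {f f' : ℝ → ℝ} {a l m : ℝ}
    (hderiv : ∀ z ∈ Ioi a, HasDerivAt f (f' z) z) (hnonneg : ∀ z ∈ Ioi a, 0 ≤ f' z)
    (ha : Tendsto f (𝓝[>] a) (𝓝 l)) (htop : Tendsto f atTop (𝓝 m)) : IntegrableOn f' (Ioi a) :=
  integrableOn_Ioi_deriv_of_nonneg (g := Function.update f a l)
    (continuousWithinAt_update_same.2 (by rwa [Ici_sdiff_left]))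
    (fun z hz => hasDerivAt_update_of_ne (hderiv z hz) (ne_of_gt hz) l) hnonneg
    (tendsto_update_atTop htop a l)

lemma integral_Ioi_of_hasDerivAt_of_tendsto_nhdsGT {f f' : ℝ → ℝ} {a l m : ℝ}
    (hderiv : ∀ z ∈ Ioi a, HasDerivAt f (f' z) z) (hint : IntegrableOn f' (Ioi a))
    (ha : Tendsto f (𝓝[>] a) (𝓝 l)) (htop : Tendsto f atTop (𝓝 m)) :
    ∫ z in Ioi a, f' z = m - l := by
  rw [integral_Ioi_of_hasDerivAt_of_tendsto (f := Function.update f a l)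
    (continuousWithinAt_update_same.2 (by rwa [Ici_sdiff_left]))
    (fun z hz => hasDerivAt_update_of_ne (hderiv z hz) (ne_of_gt hz) l) hint
    (tendsto_update_atTop htop a l), Function.update_self]

variable {n : ℕ} {s z : ℝ} {u : En n → ℝ} {ψ : ℝ → ℝ} {x : En n}

lemma CSgradSq_nonneg (y : En n) : 0 ≤ CSgradSq n s u y z :=
  add_nonneg (Finset.sum_nonneg fun _ _ => sq_nonneg _) (sq_nonneg _)

lemma Pconv_nonneg {f : En n → ℝ} (hs0 : 0 < s) (hz : 0 < z) (hf : ∀ y, 0 ≤ f y) (x : En n) :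
    0 ≤ Pconv n s z f x :=
  integral_nonneg fun y => mul_nonneg (Pker_pos hs0 hz _).le (hf y)

lemma integrableOn_rpow_mul_Pconv_CSgradSq (hu : BddContDiffTwo u) (hs0 : 0 < s) (hs1 : s < 1)
    (x : En n) : IntegrableOn
      (fun z => z ^ (1 - 2 * s) * Pconv n s z (fun y => 2 * CSgradSq n s u y z) x) (Ioi 0) := by
  have hsq : ContDiff ℝ 2 fun r : ℝ => r ^ 2 := contDiff_id.pow 2
  have hψ := contDiff_bregman hsq (u x)
  have hψ1 : deriv (bregman (fun r => r ^ 2) (u x)) (u x) = 0 := by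
    simp only [deriv_bregman (hsq.differentiable two_ne_zero), sub_self]
  have hsq1 : deriv (fun r : ℝ => r ^ 2) = fun r => 2 * r := by
    funext r
    simp
  have hψ2 : ∀ r, deriv (deriv (bregman (fun r => r ^ 2) (u x))) r = 2 := by
    simp [deriv_deriv_bregman (hsq.differentiable two_ne_zero), hsq1]
  refine integrableOn_Ioi_of_hasDerivAt_of_nonneg_of_tendsto
    (f := greenFlux n s (bregman (fun r => r ^ 2) (u x)) u x) (fun z hz => ?_) (fun z hz => ?_)
    (tendsto_greenFlux_nhdsGT_zero hψ hu hs0 hs1 (bregman_self _ _) hψ1)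
    (tendsto_greenFlux_atTop (hψ.of_le one_le_two) hu.toBddContDiffOne.bddContinuous hs0 x)
  · simpa only [hψ2] using hasDerivAt_greenFlux hψ hu hs0 hz x
  · exact mul_nonneg (Real.rpow_nonneg hz.le _)
      (Pconv_nonneg hs0 hz (fun y => mul_nonneg zero_le_two (CSgradSq_nonneg y)) x)

lemma integrableOn_rpow_mul_Pconv_deriv_deriv_mul_CSgradSq (hψ : ContDiff ℝ 2 ψ)
    (hu : BddContDiffTwo u) (hs0 : 0 < s) (hs1 : s < 1) (x : En n) :
    IntegrableOn (fun z => z ^ (1 - 2 * s) * Pconv n s z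
      (fun y => deriv (deriv ψ) (CSext n s u y z) * CSgradSq n s u y z) x) (Ioi 0) := by
  obtain ⟨C, hC⟩ := hu.toBddContDiffOne.bddContinuous.bounded
  obtain ⟨K, hK⟩ := exists_abs_le_of_continuous (continuous_deriv_deriv_of_contDiff_two hψ) C
  refine ((integrableOn_rpow_mul_Pconv_CSgradSq hu hs0 hs1 x).const_mul (K / 2)).mono' ?_ ?_
  · exact (measurable_deriv (greenFlux n s ψ u x)).aestronglyMeasurable.congr
      (ae_restrict_of_forall_mem measurableSet_Ioi fun z hz =>
        (hasDerivAt_greenFlux hψ hu hs0 hz x).deriv)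
  · refine ae_restrict_of_forall_mem measurableSet_Ioi fun z (hz : 0 < z) => ?_
    have hh := bddContinuous_CSgradSq (n := n) hu.toBddContDiffOne hs0 hz
    have hle : |(Pker n s z ⋆ fun y => deriv (deriv ψ) (CSext n s u y z) * CSgradSq n s u y z) x| ≤
        K / 2 * (Pker n s z ⋆ fun y => 2 * CSgradSq n s u y z) x := by
      refine abs_convolution_Pker_le_mul hs0 hz (hh.continuous_comp (by fun_prop)) (fun y => ?_) x
      rw [abs_mul, abs_of_nonneg (CSgradSq_nonneg y), ← mul_assoc, div_mul_cancel₀ _ two_ne_zero]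
      exact mul_le_mul_of_nonneg_right (hK _ (abs_CSext_le hC hs0 hz y)) (CSgradSq_nonneg y)
    rw [norm_mul, Real.norm_of_nonneg (by positivity), mul_left_comm]
    simp only [Pconv_eq_convolution]
    exact mul_le_mul_of_nonneg_left hle (by positivity)

lemma integral_rpow_mul_Pconv_deriv_deriv_mul_CSgradSq (hψ : ContDiff ℝ 2 ψ)
    (hu : BddContDiffTwo u) (hs0 : 0 < s) (hs1 : s < 1) (hψ0 : ψ (u x) = 0)
    (hψ1 : deriv ψ (u x) = 0) :
    ∫ z in Ioi 0, z ^ (1 - 2 * s) * Pconv n s z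
        (fun y => deriv (deriv ψ) (CSext n s u y z) * CSgradSq n s u y z) x =
      2 * s * pns n s * ∫ y, ‖x - y‖ ^ (-((n : ℝ) + 2 * s)) * ψ (u y) := by
  rw [integral_Ioi_of_hasDerivAt_of_tendsto_nhdsGT
    (fun z hz => hasDerivAt_greenFlux hψ hu hs0 hz x)
    (integrableOn_rpow_mul_Pconv_deriv_deriv_mul_CSgradSq hψ hu hs0 hs1 x)
    (tendsto_greenFlux_nhdsGT_zero hψ hu hs0 hs1 hψ0 hψ1)
    (tendsto_greenFlux_atTop (hψ.of_le one_le_two) hu.toBddContDiffOne.bddContinuous hs0 x),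
    zero_sub, neg_neg]

end Energy

section Truncation

variable {E : Type*} [NormedAddCommGroup E] [MeasurableSpace E] {μ : Measure E} {x : E} {ε : ℝ}

lemma measurableSet_lt_norm_sub [OpensMeasurableSpace E] (x : E) (ε : ℝ) :
    MeasurableSet {y | ε < ‖x - y‖} :=
  (isOpen_lt continuous_const (continuous_const.sub continuous_id).norm).measurableSet

lemma tendsto_setIntegral_lt_norm_sub [OpensMeasurableSpace E] {g : E → ℝ} (hg : Integrable g μ)
    (hx : g x = 0) :
    Tendsto (fun ε => ∫ y in {y | ε < ‖x - y‖}, g y ∂μ) (𝓝[>] 0) (𝓝 (∫ y, g y ∂μ)) := by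
  simp_rw [← integral_indicator (measurableSet_lt_norm_sub x _)]
  refine tendsto_integral_filter_of_dominated_convergence (fun y => ‖g y‖)
    (.of_forall fun ε => hg.aestronglyMeasurable.indicator (measurableSet_lt_norm_sub x ε))
    (.of_forall fun ε => .of_forall fun y => norm_indicator_le_norm_self _ _) hg.norm
    (.of_forall fun y => tendsto_const_nhds.congr' ?_)
  rcases eq_or_ne y x with rfl | hyx
  · exact .of_forall fun ε => by simp [indicator_apply, hx]
  · filter_upwards [Ioo_mem_nhdsGT (norm_pos_iff.2 (sub_ne_zero.2 hyx.symm))] with ε hε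
    exact (indicator_of_mem (show y ∈ {y | ε < ‖x - y‖} from hε.2) g).symm

lemma setIntegral_lt_norm_sub_reflect [BorelSpace E] [μ.IsAddLeftInvariant] [μ.IsNegInvariant]
    (f : E → ℝ) (x : E) (ε : ℝ) :
    ∫ y in {y | ε < ‖x - y‖}, f (x + (x - y)) ∂μ = ∫ y in {y | ε < ‖x - y‖}, f y ∂μ := by
  rw [← integral_indicator (measurableSet_lt_norm_sub x ε),
    ← integral_indicator (measurableSet_lt_norm_sub x ε), ← integral_sub_left_eq_self _ μ (x + x)]
  congr 1 with y
  have hreflect : x + (x - (x + x - y)) = y := by abel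
  have hnorm : ‖x - (x + x - y)‖ = ‖x - y‖ := by
    rw [← norm_neg, neg_sub, add_sub_assoc, add_sub_cancel_left, norm_sub_rev]
  simp only [indicator_apply, mem_ofPred_eq, hnorm, hreflect]

lemma integrableOn_norm_sub_rpow [NormedSpace ℝ E] [FiniteDimensional ℝ E] [BorelSpace E]
    [μ.IsAddHaarMeasure] {a : ℝ} (ha : (Module.finrank ℝ E : ℝ) < a) (hε : 0 < ε) (x : E) :
    IntegrableOn (fun y => ‖x - y‖ ^ (-a)) {y | ε < ‖x - y‖} μ := by
  have ha0 : 0 ≤ a := (Nat.cast_nonneg _).trans ha.le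
  refine (((integrable_one_add_norm ha).comp_sub_left x).const_mul
    ((1 + ε⁻¹) ^ a)).integrableOn.mono'
    (Measurable.aestronglyMeasurable (by fun_prop))
    (ae_restrict_of_forall_mem (measurableSet_lt_norm_sub x ε) fun y (hy : ε < ‖x - y‖) => ?_)
  have hy0 : 0 < ‖x - y‖ := hε.trans hy
  have hle : 1 + ‖x - y‖ ≤ (1 + ε⁻¹) * ‖x - y‖ := by
    rw [one_add_mul, add_comm, add_le_add_iff_left, ← div_eq_inv_mul, one_le_div hε]
    exact hy.le
  rw [Real.norm_of_nonneg (by positivity), Real.rpow_neg hy0.le, Real.rpow_neg (by positivity),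
    ← div_eq_mul_inv, inv_le_comm₀ (by positivity) (by positivity), inv_div,
    div_le_iff₀ (by positivity), mul_comm, ← Real.mul_rpow (by positivity) hy0.le]
  exact Real.rpow_le_rpow (by positivity) hle ha0

end Truncation

section PrincipalValue

variable {n : ℕ} {s ε : ℝ} {u g : En n → ℝ} {φ : ℝ → ℝ}

/-- The truncated singular integral whose limit as `ε → 0⁺`, times `C(n,s)`, is the fractional
Laplacian. -/
def fracLapTrunc (n : ℕ) (s : ℝ) (w : En n → ℝ) (x : En n) (ε : ℝ) : ℝ :=
  ∫ y in {y : En n | ε < ‖x - y‖}, (w x - w y) / ‖x - y‖ ^ ((n : ℝ) + 2 * s)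

lemma Lam_eq_of_tendsto {w : En n → ℝ} {x : En n} {L : ℝ}
    (hL : Tendsto (fracLapTrunc n s w x) (𝓝[>] 0) (𝓝 L)) : Lam n s w x = -(Cns n s * L) :=
  congrArg (fun t => -(Cns n s * t)) hL.limUnder_eq

lemma BddContinuous.integrableOn_div_norm_sub_rpow (hg : BddContinuous g) (hs0 : 0 < s)
    (hε : 0 < ε) (x : En n) :
    IntegrableOn (fun y => g y / ‖x - y‖ ^ ((n : ℝ) + 2 * s)) {y | ε < ‖x - y‖} := by
  obtain ⟨C, hC⟩ := hg.bounded
  simp only [div_eq_mul_inv, ← Real.rpow_neg (norm_nonneg _)]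
  exact (integrableOn_norm_sub_rpow (by simpa using hs0) hε x).bdd_mul
    hg.continuous.aestronglyMeasurable (.of_forall hC)

lemma two_mul_fracLapTrunc (hu : BddContinuous u) (hs0 : 0 < s) (hε : 0 < ε) (x : En n) :
    2 * fracLapTrunc n s u x ε = ∫ y in {y | ε < ‖x - y‖},
      ‖x - y‖ ^ (-((n : ℝ) + 2 * s)) * (2 * u x - u y - u (x + (x - y))) := by
  have hdiff : BddContinuous fun y => u x - u y :=
    hu.continuous_comp (φ := fun r => u x - r) (by fun_prop)
  have hrefl : BddContinuous fun y => u x - u (x + (x - y)) :=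
    hdiff.comp_continuous (continuous_const.add (continuous_const.sub continuous_id))
  have hreflect : ∫ y in {y | ε < ‖x - y‖},
      (u x - u (x + (x - y))) / ‖x - y‖ ^ ((n : ℝ) + 2 * s) = fracLapTrunc n s u x ε := by
    simpa only [sub_add_cancel_left, norm_neg, fracLapTrunc] using setIntegral_lt_norm_sub_reflect
      (μ := volume) (fun y => (u x - u y) / ‖x - y‖ ^ ((n : ℝ) + 2 * s)) x ε
  nth_rewrite 1 [two_mul, ← hreflect]
  rw [fracLapTrunc, ← integral_add (hrefl.integrableOn_div_norm_sub_rpow hs0 hε x)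
    (hdiff.integrableOn_div_norm_sub_rpow hs0 hε x)]
  congr 1 with y
  rw [Real.rpow_neg (norm_nonneg _)]
  ring

lemma BddContDiffTwo.exists_tendsto_fracLapTrunc (hu : BddContDiffTwo u) (hs0 : 0 < s)
    (hs1 : s < 1) (x : En n) : ∃ L, Tendsto (fracLapTrunc n s u x) (𝓝[>] 0) (𝓝 L) := by
  have hu0 := hu.toBddContDiffOne.bddContinuous
  have hcont := hu0.continuous
  obtain ⟨M, -, hM⟩ := hu.exists_norm_second_difference_le
  have hint : Integrable fun y =>
      ‖x - y‖ ^ (-((n : ℝ) + 2 * s)) * (2 * u x - u y - u (x + (x - y))) := by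
    refine integrable_norm_sub_rpow_mul (M := M) volume (by simpa using hs0) (by simp; linarith)
      (Continuous.aestronglyMeasurable (by fun_prop)) fun y => ?_
    have hle := hM x (x - y)
    rwa [sub_sub_cancel, smul_eq_mul, norm_sub_rev, ← sub_sub] at hle
  have hlim := (tendsto_setIntegral_lt_norm_sub (x := x) hint (by simp [two_mul])).div_const 2
  refine ⟨_, hlim.congr' ?_⟩
  filter_upwards [self_mem_nhdsWithin] with ε hε
  rw [← two_mul_fracLapTrunc hu0 hs0 hε, mul_div_cancel_left₀ _ two_ne_zero]

lemma fracLapTrunc_comp (hφ : Continuous φ) (hu : BddContinuous u) (hs0 : 0 < s)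
    (hε : 0 < ε) (x : En n) :
    fracLapTrunc n s (fun y => φ (u y)) x ε = deriv φ (u x) * fracLapTrunc n s u x ε -
      ∫ y in {y | ε < ‖x - y‖}, ‖x - y‖ ^ (-((n : ℝ) + 2 * s)) * bregman φ (u x) (u y) := by
  have hdiff : BddContinuous fun y => u x - u y :=
    hu.continuous_comp (φ := fun r => u x - r) (by fun_prop)
  have hbregman : BddContinuous fun y => bregman φ (u x) (u y) :=
    hu.continuous_comp (φ := bregman φ (u x)) (by unfold bregman; fun_prop)
  simp only [Real.rpow_neg (norm_nonneg _), ← div_eq_inv_mul]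
  rw [fracLapTrunc, fracLapTrunc, ← integral_const_mul, ← integral_sub
    ((hdiff.integrableOn_div_norm_sub_rpow hs0 hε x).const_mul _)
    (hbregman.integrableOn_div_norm_sub_rpow hs0 hε x)]
  congr 1 with y
  rw [bregman]
  ring

lemma Lam_comp_sub_deriv_mul_Lam_eq_integral_bregman (hφ : ContDiff ℝ 2 φ)
    (hu : BddContDiffTwo u) (hs0 : 0 < s) (hs1 : s < 1) (x : En n) :
    Lam n s (fun y => φ (u y)) x - deriv φ (u x) * Lam n s u x =
      Cns n s * ∫ y, ‖x - y‖ ^ (-((n : ℝ) + 2 * s)) * bregman φ (u x) (u y) := by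
  have hu0 := hu.toBddContDiffOne.bddContinuous
  have hψ := contDiff_bregman hφ (u x)
  obtain ⟨M, hM⟩ := exists_abs_comp_le_mul_min (x := x) hψ hu.toBddContDiffOne
    (bregman_self φ (u x)) (by simp only [deriv_bregman (hφ.differentiable two_ne_zero), sub_self])
  obtain ⟨L, hL⟩ := hu.exists_tendsto_fracLapTrunc hs0 hs1 x
  have hint : Integrable fun y => ‖x - y‖ ^ (-((n : ℝ) + 2 * s)) * bregman φ (u x) (u y) :=
    integrable_norm_sub_rpow_mul volume (by simpa using hs0) (by simp; linarith)
      (hψ.continuous.comp hu0.continuous).aestronglyMeasurable hM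
  have hcomp := ((hL.const_mul (deriv φ (u x))).sub
    (tendsto_setIntegral_lt_norm_sub (x := x) hint (by simp [bregman_self]))).congr' <| by
      filter_upwards [self_mem_nhdsWithin] with ε hε
      exact (fracLapTrunc_comp hφ.continuous hu0 hs0 hε x).symm
  rw [Lam_eq_of_tendsto hL, Lam_eq_of_tendsto hcomp]
  ring

lemma betaS_mul_pns (n : ℕ) (hs0 : 0 < s) (hs1 : s < 1) :
    betaS s * (2 * s * pns n s) = Cns n s := by
  have hreflect : |Real.Gamma (-s)| = Real.Gamma (1 - s) / s := by
    have hrec := Real.Gamma_add_one (neg_ne_zero.2 hs0.ne')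
    rw [neg_add_eq_sub] at hrec
    rw [hrec, neg_mul, neg_div, mul_div_cancel_left₀ _ hs0.ne', abs_of_neg]
    nlinarith [Real.Gamma_pos_of_pos (sub_pos.2 hs1)]
  have hpow : (2 : ℝ) ^ (2 * s - 1) = 4 ^ s / 2 := by
    rw [Real.rpow_sub_one two_ne_zero, Real.rpow_mul zero_le_two]
    norm_num
  have hΓ1 := (Real.Gamma_pos_of_pos (sub_pos.2 hs1)).ne'
  have hΓs := (Real.Gamma_pos_of_pos hs0).ne'
  have hπ := (Real.rpow_pos_of_pos Real.pi_pos ((n : ℝ) / 2)).ne'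
  rw [betaS, pns, Cns, hreflect, hpow]
  field_simp

end PrincipalValue

section PowerFunction

variable {p q : ℝ}

lemma continuous_abs_rpow (hp : 0 ≤ p) : Continuous fun r : ℝ => |r| ^ p :=
  continuous_abs.rpow_const fun _ => .inr hp

lemma hasDerivAt_abs_rpow_mul_self (hp : 0 ≤ p) (r : ℝ) :
    HasDerivAt (fun r : ℝ => |r| ^ p * r) ((p + 1) * |r| ^ p) r := by
  have hne : ∀ r ≠ 0, HasDerivAt (fun r : ℝ => |r| ^ p * r) ((p + 1) * |r| ^ p) r := fun r hr => by
    refine (((hasDerivAt_abs hr).rpow_const (.inl (abs_ne_zero.2 hr))).mul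
      (hasDerivAt_id r)).congr_deriv ?_
    rw [id, ← sub_add_cancel p 1, Real.rpow_add_one (abs_ne_zero.2 hr), add_sub_cancel_right]
    linear_combination p * |r| ^ (p - 1) * sign_mul_self r
  have hcont := continuous_abs_rpow hp
  rcases eq_or_ne r 0 with rfl | hr
  · exact hasDerivAt_of_hasDerivAt_of_ne hne (hcont.mul continuous_id).continuousAt
      (hcont.const_mul (p + 1)).continuousAt
  · exact hne r hr

lemma deriv_abs_rpow (hq : 1 < q) :
    deriv (fun r : ℝ => |r| ^ q) = fun r => q * (|r| ^ (q - 2) * r) := by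
  funext r
  rw [(hasDerivAt_abs_rpow r hq).deriv, mul_assoc]

lemma hasDerivAt_deriv_abs_rpow (hq : 2 ≤ q) (r : ℝ) :
    HasDerivAt (deriv fun r : ℝ => |r| ^ q) (q * (q - 1) * |r| ^ (q - 2)) r := by
  rw [deriv_abs_rpow (one_lt_two.trans_le hq)]
  exact ((hasDerivAt_abs_rpow_mul_self (sub_nonneg.2 hq) r).const_mul q).congr_deriv (by ring)

lemma contDiff_two_abs_rpow (hq : 2 ≤ q) : ContDiff ℝ 2 fun r : ℝ => |r| ^ q := by
  rw [← one_add_one_eq_two, contDiff_succ_iff_deriv, contDiff_one_iff_deriv]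
  refine ⟨fun r => (hasDerivAt_abs_rpow r (one_lt_two.trans_le hq)).differentiableAt, by simp,
    fun r => (hasDerivAt_deriv_abs_rpow hq r).differentiableAt, ?_⟩
  rw [funext fun r => (hasDerivAt_deriv_abs_rpow hq r).deriv]
  exact (continuous_abs_rpow (sub_nonneg.2 hq)).const_mul _

end PowerFunction

lemma Lam_comp_sub_deriv_mul_Lam {n : ℕ} {s : ℝ} {u : En n → ℝ} {φ : ℝ → ℝ}
    (hφ : ContDiff ℝ 2 φ) (hu : BddContDiffTwo u) (hs0 : 0 < s) (hs1 : s < 1) (x : En n) :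
    Lam n s (fun y => φ (u y)) x - deriv φ (u x) * Lam n s u x =
      betaS s * ∫ z in Ioi 0, z ^ (1 - 2 * s) * Pconv n s z
        (fun y => deriv (deriv φ) (CSext n s u y z) * CSgradSq n s u y z) x := by
  have hφ' := hφ.differentiable two_ne_zero
  have henergy := integral_rpow_mul_Pconv_deriv_deriv_mul_CSgradSq (contDiff_bregman hφ (u x)) hu
    hs0 hs1 (bregman_self φ (u x)) (by simp only [deriv_bregman hφ', sub_self])
  rw [deriv_deriv_bregman hφ'] at henergy
  rw [Lam_comp_sub_deriv_mul_Lam_eq_integral_bregman hφ hu hs0 hs1 x, henergy, ← mul_assoc,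
    betaS_mul_pns n hs0 hs1]

lemma integral_Pconv_const_mul {n : ℕ} {s : ℝ} (c : ℝ) (f : ℝ → En n → ℝ) (w : ℝ → ℝ)
    (μ : Measure ℝ) (x : En n) :
    ∫ z, Pconv n s z (fun y => c * f z y) x * w z ∂μ = c * ∫ z, Pconv n s z (f z) x * w z ∂μ := by
  simp only [Pconv, mul_left_comm _ c, integral_const_mul, mul_assoc]

theorem pointwise_Stroock_Varopoulos_general {n : ℕ} {s q : ℝ} {u : En n → ℝ} (hs0 : 0 < s)
    (hs1 : s < 1) (hq : 2 ≤ q) (hu : BddContDiffTwo u) (x : En n) :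
    (1 / q) * Lam n s (fun y => |u y| ^ q) x - |u x| ^ (q - 2) * u x * Lam n s u x =
      (4 * (q - 1) / q ^ 2) * betaS s * ∫ z in Ioi (0 : ℝ),
        Pconv n s z (fun y => (q ^ 2 / 4) * |CSext n s u y z| ^ (q - 2) * CSgradSq n s u y z) x *
          z ^ (1 - 2 * s) := by
  have hq0 : q ≠ 0 := (two_pos.trans_le hq).ne'
  have hφ2 := funext fun r => (hasDerivAt_deriv_abs_rpow hq r).deriv
  have hLam := Lam_comp_sub_deriv_mul_Lam (contDiff_two_abs_rpow hq) hu hs0 hs1 x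
  rw [hφ2, deriv_abs_rpow (one_lt_two.trans_le hq)] at hLam
  simp only [mul_assoc (q * (q - 1)), mul_comm (_ ^ (1 - 2 * s)), integral_Pconv_const_mul] at hLam
  simp only [mul_assoc (q ^ 2 / 4), integral_Pconv_const_mul]
  field_simp
  linear_combination hLam

/-- **Pointwise Stroock–Varopoulos identity** (Corollary, Euclidean case): for `q ≥ 2`,
`(1/q) Λ^s(|u|^q) - |u|^{q-2} u Λ^s u
  = (4(q-1)/q²) β_s ∫₀^∞ (P_z^{(s)} ∗ ((q²/4)|U|^{q-2}|∇̃U|²))(x) z^{1-2s} dz`. -/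
theorem pointwise_Stroock_Varopoulos (n : ℕ) (hn : 1 ≤ n) (s : ℝ) (hs0 : 0 < s) (hs1 : s < 1)
    (q : ℝ) (hq : 2 ≤ q)
    (u : En n → ℝ) (hu : ContDiff ℝ (⊤ : ℕ∞) u) (huc : HasCompactSupport u) :
    ∀ x : En n,
      (1 / q) * Lam n s (fun y => |u y| ^ q) x - |u x| ^ (q - 2) * u x * Lam n s u x =
        (4 * (q - 1) / q ^ 2) * betaS s *
          ∫ z in Ioi (0 : ℝ),
            Pconv n s z
              (fun y =>
                (q ^ 2 / 4) * |CSext n s u y z| ^ (q - 2) *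
                  ((∑ i, (pd i (fun y' => CSext n s u y' z) y) ^ 2)
                    + (deriv (CSext n s u y) z) ^ 2)) x
              * z ^ (1 - 2 * s) := by
  exact pointwise_Stroock_Varopoulos_general hs0 hs1 hq
    (bddContDiffTwo_of_hasCompactSupport (contDiff_infty.1 hu 2) huc)
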